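/- Let (W,S) be a Coxeter system and let h be a reflection-stable Abe realization of W over an integral domain k. Let W′ be any reflection subgroup of W with canonical generating set S′. Then h is an Abe realization for (W′,S′): for every reflection datum for (W′,S′), with Cartan pairings a_{s′,t′} = ⟨α_{s′}∨, α_{t′}⟩, and for all distinct s′,t′ ∈ S′ such that m′ := (order of s′t′) is finite, one has binom(m′,k)_x(a_{s′,t′}, a_{t′,s′}) = 0 = binom(m′,k)_y(a_{s′,t′}, a_{t′,s′}) for all 1 ≤ k ≤ m′−1. -/

import Mathlib

/-!
Statement 12: a reflection-stable Abe realization of `(W,S)` is an Abe realization for every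
reflection subgroup `(W', S')`.
-/

attribute [local instance] Classical.propDecidable

noncomputable section

namespace PaperStmt

/-- `ℤ[x,y]`. -/
abbrev A2 : Type := MvPolynomial (Fin 2) ℤ

/-- The variable `x`. -/
def varX : A2 := MvPolynomial.X 0

/-- The variable `y`. -/
def varY : A2 := MvPolynomial.X 1

/-- The pair of two-colored quantum numbers `([n]_x, [n]_y)` for `n ∈ ℕ`. -/
def qPair : ℕ → A2 × A2
  | 0 => (0, 0)
  | 1 => (1, 1)
  | n + 2 =>
      (varX * (qPair (n + 1)).2 - (qPair n).1,
        varY * (qPair (n + 1)).1 - (qPair n).2)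

/-- The two-colored quantum number `[n]_x`, `n ∈ ℤ` (the recursions of the paper, used in both
directions, force `[-n]_x = -[n]_x`). -/
def qX (n : ℤ) : A2 := if 0 ≤ n then (qPair n.toNat).1 else -(qPair (-n).toNat).1

/-- The two-colored quantum number `[n]_y`, `n ∈ ℤ`. -/
def qY (n : ℤ) : A2 := if 0 ≤ n then (qPair n.toNat).2 else -(qPair (-n).toNat).2

/-- The `d`-twisted variable `x(d) = [d+1]_x − [d−1]_x`. -/
def twX (d : ℤ) : A2 := qX (d + 1) - qX (d - 1)

/-- The `d`-twisted variable `y(d) = [d+1]_y − [d−1]_y`. -/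
def twY (d : ℤ) : A2 := qY (d + 1) - qY (d - 1)
/-- Substitution `x ↦ x(d), y ↦ y(d)` in `ℤ[x,y]`. -/
def twist (d : ℤ) (p : A2) : A2 := MvPolynomial.aeval ![twX d, twY d] p

/-- The two-colored quantum binomial coefficient `binom(n,j)_x`: the unique element of
`ℤ[x,y]` whose product with `[1]_x [2]_x ⋯ [j]_x` is `[n]_x [n−1]_x ⋯ [n−j+1]_x`. -/
def qbinomX (n j : ℕ) : A2 :=
  if h : ∃ p : A2,
      p * ∏ i ∈ Finset.range j, qX ((i : ℤ) + 1) =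
        ∏ i ∈ Finset.range j, qX ((n : ℤ) - (i : ℤ)) then
    h.choose
  else 0

/-- The two-colored quantum binomial coefficient `binom(n,j)_y`. -/
def qbinomY (n j : ℕ) : A2 :=
  if h : ∃ p : A2,
      p * ∏ i ∈ Finset.range j, qY ((i : ℤ) + 1) =
        ∏ i ∈ Finset.range j, qY ((n : ℤ) - (i : ℤ)) then
    h.choose
  else 0

/-- Evaluation `p(a,b)` of `p ∈ ℤ[x,y]` in a commutative ring, at `x ↦ a`, `y ↦ b`. -/
def pev {k : Type*} [CommRing k] (a b : k) (p : A2) : k := MvPolynomial.aeval ![a, b] p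
variable {B W : Type*} [Group W] {M : CoxeterMatrix B}

/-- A pre-realization of the Coxeter system `cs` over `k`: a `k`-module `V` with simple
coroots in `V` and simple roots in the dual `V* = Module.Dual k V`, such that the pairing of
each simple root with its coroot is `2`, the formula `s(v) = v − ⟨v, α_s⟩ α_s∨` defines a
representation `rep` of `W` on `V`, and each simple root is surjective onto `k`
(Demazure surjectivity). -/
structure PreRealization (cs : CoxeterSystem M W) (k V : Type*)
    [CommRing k] [AddCommGroup V] [Module k V] where
  coroot : B → V
  root : B → Module.Dual k V
  rep : W →* Module.End k V
  root_coroot_eq_two : ∀ i : B, root i (coroot i) = 2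
  rep_simple : ∀ (i : B) (v : V), rep (cs.simple i) v = v - root i v • coroot i
  root_surjective : ∀ i : B, Function.Surjective ⇑(root i)

variable {k V : Type*} [CommRing k] [AddCommGroup V] [Module k V] {cs : CoxeterSystem M W}

/-- The contragredient action of `W` on the dual `V*`. -/
def dAct (R : PreRealization cs k V) (w : W) (f : Module.Dual k V) : Module.Dual k V :=
  f.comp (R.rep w⁻¹)

/-- The canonical (Deodhar–Dyer) generating set of a subset `A ⊆ W`:
`{t ∈ ℛ(W) : N(t) ∩ A = {t}}` where `N(x) = {r ∈ ℛ(W) : ℓ(xr) < ℓ(x)}`. -/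
def canonicalGens (cs : CoxeterSystem M W) (A : Set W) : Set W :=
  {t : W | cs.IsReflection t ∧
    ({r : W | cs.IsReflection r ∧ cs.length (t * r) < cs.length t} ∩ A) = {t}}

/-- `W'` is a reflection subgroup: it is generated by the reflections it contains. -/
def IsReflectionSubgroup (cs : CoxeterSystem M W) (W' : Subgroup W) : Prop :=
  W' = Subgroup.closure ((W' : Set W) ∩ {r : W | cs.IsReflection r})

/-- A reflection datum on a subset `A ⊆ W`: maps `w_•, r_•` with `t = w_t r_t w_t⁻¹` and
`ℓ(w_t r_t) > ℓ(w_t)` for all `t ∈ A`. -/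
def IsReflectionDatum (cs : CoxeterSystem M W) (A : Set W) (wm : W → W) (rm : W → B) : Prop :=
  ∀ t ∈ A, t = wm t * cs.simple (rm t) * (wm t)⁻¹ ∧
    cs.length (wm t) < cs.length (wm t * cs.simple (rm t))

/-- The root `α_t = w_t · α_{r_t}` attached to `t` by a reflection datum. -/
def datumRoot (R : PreRealization cs k V) (wm : W → W) (rm : W → B) (t : W) :
    Module.Dual k V :=
  dAct R (wm t) (R.root (rm t))

/-- The coroot `α_t∨ = w_t · α_{r_t}∨` attached to `t` by a reflection datum. -/
def datumCoroot (R : PreRealization cs k V) (wm : W → W) (rm : W → B) (t : W) : V :=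
  R.rep (wm t) (R.coroot (rm t))

/-- The Cartan pairing `a_{t,t'} = ⟨α_t∨, α_{t'}⟩` attached to a reflection datum. -/
def cartan (R : PreRealization cs k V) (wm : W → W) (rm : W → B) (t t' : W) : k :=
  datumRoot R wm rm t' (datumCoroot R wm rm t)

/-- The Cartan entry `a_{s,t} = ⟨α_s∨, α_t⟩` for simple reflections. -/
def cartanS (R : PreRealization cs k V) (s t : B) : k := R.root t (R.coroot s)
/-- `R` is a reflection-stable Abe realization: for all distinct `s, t ∈ S` with
`m = m_{s,t}` finite and every divisor `v > 1` of `m`, the `(m/v)`-twisted two-colored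
quantum binomial coefficients `binom(v,j)`, `1 ≤ j ≤ v−1`, vanish at `(a_{s,t}, a_{t,s})`. -/
def ReflectionStable (cs : CoxeterSystem M W) {k V : Type*} [CommRing k] [AddCommGroup V]
    [Module k V] (R : PreRealization cs k V) : Prop :=
  ∀ s t : B, s ≠ t → orderOf (cs.simple s * cs.simple t) ≠ 0 →
    ∀ v : ℕ, 1 < v → v ∣ orderOf (cs.simple s * cs.simple t) →
      ∀ j : ℕ, 1 ≤ j → j ≤ v - 1 →
        pev (cartanS R s t) (cartanS R t s)
            (twist ((orderOf (cs.simple s * cs.simple t) / v : ℕ) : ℤ) (qbinomX v j)) = 0 ∧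
        pev (cartanS R s t) (cartanS R t s)
            (twist ((orderOf (cs.simple s * cs.simple t) / v : ℕ) : ℤ) (qbinomY v j)) = 0

set_option linter.all false
section rank2
variable {E : Type*} [AddCommGroup E] [Module ℝ E]

def rfl2 (Φ : E →ₗ[ℝ] E →ₗ[ℝ] ℝ) (a : E) : Module.End ℝ E :=
  LinearMap.id - (2 : ℝ) • (Φ a).smulRight a

theorem rfl2_apply (Φ : E →ₗ[ℝ] E →ₗ[ℝ] ℝ) (a v : E) :
    rfl2 Φ a v = v - (2 * Φ a v) • a := by
  simp [rfl2, mul_smul]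

def Useq (C : ℝ) : ℕ → ℝ
  | 0 => 0
  | 1 => 1
  | n + 2 => 2 * C * Useq C (n + 1) - Useq C n

theorem Useq_add_two (C : ℝ) (n : ℕ) :
    Useq C (n + 2) = 2 * C * Useq C (n + 1) - Useq C n := rfl

theorem Useq_sin {θ : ℝ} (hθ : Real.sin θ ≠ 0) (n : ℕ) :
    Useq (Real.cos θ) n = Real.sin (n * θ) / Real.sin θ ∧
    Useq (Real.cos θ) (n + 1) = Real.sin ((n + 1 : ℕ) * θ) / Real.sin θ := by
  induction n with
  | zero => simp [Useq, hθ]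
  | succ n ih =>
    refine ⟨ih.2, ?_⟩
    rw [Useq_add_two, ih.1, ih.2]
    have e1 : (((n + 1 + 1 : ℕ) : ℝ) * θ) = ((n + 1 : ℕ) : ℝ) * θ + θ := by push_cast; ring
    have e2 : ((n : ℝ) * θ) = ((n + 1 : ℕ) : ℝ) * θ - θ := by push_cast; ring
    rw [e1, e2, Real.sin_add, Real.sin_sub]
    field_simp
    ring

theorem Useq_one (n : ℕ) : Useq 1 n = n ∧ Useq 1 (n + 1) = n + 1 := by
  induction n with
  | zero => simp [Useq]
  | succ n ih =>
    refine ⟨by rw [ih.2]; push_cast; ring, ?_⟩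
    rw [Useq_add_two, ih.1, ih.2]
    push_cast; ring

theorem Useq_abs {C : ℝ} (hC : 1 ≤ |C|) (n : ℕ) :
    |Useq C n| + 1 ≤ |Useq C (n + 1)| := by
  induction n with
  | zero => simp [Useq]
  | succ n ih =>
    rw [Useq_add_two]
    have h1 := abs_sub_abs_le_abs_sub (2 * C * Useq C (n + 1)) (Useq C n)
    rw [abs_mul, abs_mul, abs_two] at h1
    have h2 : 0 ≤ (|C| - 1) * |Useq C (n+1)| := mul_nonneg (by linarith) (abs_nonneg _)
    nlinarith

theorem Useq_ne {C : ℝ} (hC : 1 ≤ |C|) (n : ℕ) : Useq C (n + 1) ≠ 0 := by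
  intro h
  have := Useq_abs hC n
  rw [h, abs_zero] at this
  have := abs_nonneg (Useq C n)
  linarith

variable {Φ : E →ₗ[ℝ] E →ₗ[ℝ] ℝ}

theorem rot_pow {a b : E} {C : ℝ} (ha : Φ a a = 1) (hb : Φ b b = 1) (hab : Φ a b = -C)
    (hba : Φ b a = -C) (n : ℕ) :
    ((rfl2 Φ a * rfl2 Φ b) ^ n) a = Useq C (2 * n + 1) • a + Useq C (2 * n) • b ∧
    ((rfl2 Φ a * rfl2 Φ b) ^ n) b =
      (-Useq C (2 * n)) • a + (Useq C (2 * n + 1) - 2 * C * Useq C (2 * n)) • b := by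
  induction n with
  | zero => simp [Useq]
  | succ n ih =>
    have e1 : Useq C (2 * (n + 1)) = 2 * C * Useq C (2 * n + 1) - Useq C (2 * n) := rfl
    have e2 : Useq C (2 * (n + 1) + 1) = 2 * C * Useq C (2 * (n + 1)) - Useq C (2 * n + 1) := rfl
    rw [e2, e1]
    constructor
    · rw [pow_succ', Module.End.mul_apply, ih.1]
      simp only [Module.End.mul_apply, rfl2_apply, map_add, map_sub, map_smul, ha, hb, hab, hba,
        smul_eq_mul]
      module
    · rw [pow_succ', Module.End.mul_apply, ih.2]
      simp only [Module.End.mul_apply, rfl2_apply, map_add, map_sub, map_smul, ha, hb, hab, hba,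
        smul_eq_mul]
      module

theorem gram_indep {a b : E} {C : ℝ} (ha : Φ a a = 1) (hb : Φ b b = 1) (hab : Φ a b = -C)
    (hba : Φ b a = -C) (hC : 1 - C ^ 2 ≠ 0) {p q : ℝ} (h1 : Φ a (p • a + q • b) = 0)
    (h2 : Φ b (p • a + q • b) = 0) : p = 0 ∧ q = 0 := by
  simp only [map_add, map_smul, ha, hb, hab, hba, smul_eq_mul] at h1 h2
  constructor
  · apply (mul_eq_zero.mp (show (1 - C ^ 2) * p = 0 by linear_combination h1 + C * h2)).resolve_left hC
  · apply (mul_eq_zero.mp (show (1 - C ^ 2) * q = 0 by linear_combination C * h1 + h2)).resolve_left hC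

theorem rfl2_inv (hs : ∀ v w, Φ v w = Φ w v) {a : E} (ha : Φ a a = 1) (v w : E) :
    Φ (rfl2 Φ a v) (rfl2 Φ a w) = Φ v w := by
  simp only [rfl2_apply, map_sub, map_smul, LinearMap.sub_apply, LinearMap.smul_apply, ha,
    smul_eq_mul, hs v a]
  ring

theorem rot_inv (hs : ∀ v w, Φ v w = Φ w v) {a b : E} (ha : Φ a a = 1) (hb : Φ b b = 1)
    (n : ℕ) (v w : E) :
    Φ (((rfl2 Φ a * rfl2 Φ b) ^ n) v) (((rfl2 Φ a * rfl2 Φ b) ^ n) w) = Φ v w := by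
  induction n with
  | zero => simp
  | succ n ih =>
    rw [pow_succ', Module.End.mul_apply, Module.End.mul_apply, Module.End.mul_apply,
      Module.End.mul_apply, rfl2_inv hs ha, rfl2_inv hs hb, ih]

theorem rot_sub (Φ : E →ₗ[ℝ] E →ₗ[ℝ] ℝ) (a b : E) (n : ℕ) (v : E) :
    ∃ p q : ℝ, ((rfl2 Φ a * rfl2 Φ b) ^ n) v = v + (p • a + q • b) := by
  induction n with
  | zero => exact ⟨0, 0, by simp⟩
  | succ n ih =>
    obtain ⟨p, q, h⟩ := ih
    rw [pow_succ', Module.End.mul_apply, h]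
    simp only [Module.End.mul_apply, rfl2_apply]
    set x := v + (p • a + q • b) with hx
    refine ⟨p - 2 * Φ a (x - (2 * Φ b x) • b), q - 2 * Φ b x, ?_⟩
    module

theorem rot_eq_one (hs : ∀ v w, Φ v w = Φ w v) {a b : E} {C : ℝ} (ha : Φ a a = 1)
    (hb : Φ b b = 1) (hab : Φ a b = -C) (hC : 1 - C ^ 2 ≠ 0) {n : ℕ}
    (h0 : Useq C (2 * n) = 0) (h1 : Useq C (2 * n + 1) = 1) :
    (rfl2 Φ a * rfl2 Φ b) ^ n = 1 := by
  have hba : Φ b a = -C := by rw [hs, hab]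
  have hr := rot_pow ha hb hab hba n
  rw [h0, h1] at hr
  ext v
  obtain ⟨p, q, h⟩ := rot_sub Φ a b n v
  have ia := rot_inv hs ha hb n a v
  have ib := rot_inv hs ha hb n b v
  rw [hr.1, h] at ia
  rw [hr.2, h] at ib
  simp only [one_smul, zero_smul, add_zero, neg_zero, zero_add, mul_zero, sub_zero,
    map_add Φ, map_add (Φ a), map_add (Φ b)] at ia ib
  obtain ⟨rfl, rfl⟩ := gram_indep (p := p) (q := q) ha hb hab hba hC (by rw [map_add]; linarith) (by rw [map_add]; linarith)
  simp [h]

theorem sin_pi_div_pos {N : ℕ} (hN : 2 ≤ N) : 0 < Real.sin (Real.pi / N) := by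
  have h : (2 : ℝ) ≤ N := by exact_mod_cast hN
  apply Real.sin_pos_of_pos_of_lt_pi
  · have := Real.pi_pos
    positivity
  · have := Real.pi_pos
    rw [div_lt_iff₀ (by linarith)]
    nlinarith

theorem rot_order (hs : ∀ v w, Φ v w = Φ w v) {a b : E} {N : ℕ} (hN : 2 ≤ N) (ha : Φ a a = 1)
    (hb : Φ b b = 1) (hab : Φ a b = -Real.cos (Real.pi / N)) :
    orderOf (rfl2 Φ a * rfl2 Φ b) = N := by
  have hba : Φ b a = -Real.cos (Real.pi / N) := by rw [hs, hab]
  have hsin := sin_pi_div_pos hN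
  have hN0 : (N : ℝ) ≠ 0 := by positivity
  have hC : 1 - Real.cos (Real.pi / N) ^ 2 ≠ 0 := by
    rw [← Real.sin_sq]; positivity
  apply Nat.dvd_antisymm
  · apply orderOf_dvd_of_pow_eq_one
    apply rot_eq_one hs ha hb hab hC
    · rw [(Useq_sin hsin.ne' _).1]
      have : ((2 * N : ℕ) : ℝ) * (Real.pi / N) = 2 * Real.pi := by push_cast; field_simp
      rw [this]; simp
    · rw [(Useq_sin hsin.ne' _).1]
      have : ((2 * N + 1 : ℕ) : ℝ) * (Real.pi / N) = Real.pi / N + 2 * Real.pi := by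
        push_cast; field_simp; ring
      rw [this, Real.sin_add_two_pi, div_self hsin.ne']
  · set n := orderOf (rfl2 Φ a * rfl2 Φ b) with hn
    have h1 : (rfl2 Φ a * rfl2 Φ b) ^ n = 1 := pow_orderOf_eq_one _
    have hr := (rot_pow ha hb hab hba n).1
    rw [h1, Module.End.one_apply] at hr
    set C := Real.cos (Real.pi / N) with hCdef
    have hz : (Useq C (2 * n + 1) - 1) • a + Useq C (2 * n) • b = 0 := by
      rw [sub_smul, one_smul, sub_add_eq_add_sub, ← hr, sub_self]
    obtain ⟨e1, e2⟩ := gram_indep (Φ := Φ) ha hb hab hba hC (by rw [hz, map_zero]) (by rw [hz, map_zero])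
    rw [hCdef, (Useq_sin hsin.ne' _).1] at e1 e2
    rw [sub_eq_zero, div_eq_one_iff_eq hsin.ne'] at e1
    rw [div_eq_zero_iff] at e2
    replace e2 := e2.resolve_right hsin.ne'
    have e3 : ((2 * n + 1 : ℕ) : ℝ) * (Real.pi / N) = ((2 * n : ℕ) : ℝ) * (Real.pi / N) + Real.pi / N := by
      push_cast; ring
    rw [e3, Real.sin_add, e2, zero_mul, zero_add] at e1
    have e4 := mul_right_cancel₀ hsin.ne' (e1.trans (one_mul _).symm)
    obtain ⟨z, hz⟩ := (Real.cos_eq_one_iff _).mp e4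
    have : ((n : ℤ) : ℝ) = ((N * z : ℤ) : ℝ) := by
      push_cast at hz ⊢
      have hp := Real.pi_ne_zero
      field_simp at hz
      linarith
    have h5 : (n : ℤ) = N * z := by exact_mod_cast this
    exact_mod_cast (Dvd.intro z h5.symm : (N : ℤ) ∣ n)

end rank2

section geom

/-- the canonical bilinear form -/
def gB (M : CoxeterMatrix B) : (B →₀ ℝ) →ₗ[ℝ] (B →₀ ℝ) →ₗ[ℝ] ℝ :=
  Finsupp.linearCombination ℝ
    (fun i => Finsupp.linearCombination ℝ (fun j => -Real.cos (Real.pi / (M i j : ℕ))))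

def ee (i : B) : B →₀ ℝ := Finsupp.single i 1

theorem gB_ee (M : CoxeterMatrix B) (i j : B) :
    gB M (ee i) (ee j) = -Real.cos (Real.pi / (M i j : ℕ)) := by
  simp [gB, ee, Finsupp.linearCombination_single]

theorem gB_self (M : CoxeterMatrix B) (i : B) : gB M (ee i) (ee i) = 1 := by
  rw [gB_ee, M.diagonal]; simp

theorem gB_symm (M : CoxeterMatrix B) (v w : B →₀ ℝ) : gB M v w = gB M w v := by
  have : gB M = (gB M).flip := by
    ext i j
    have := gB_ee M i j
    have h2 := gB_ee M j i
    rw [M.symmetric] at h2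
    simp only [ee] at this h2
    simp [this, h2]
  exact congrArg (fun F => F v w) this

theorem M_two_le (M : CoxeterMatrix B) {i j : B} (h : i ≠ j) (h0 : M i j ≠ 0) : 2 ≤ M i j := by
  have := M.off_diagonal i j h
  omega

theorem geom_liftable (M : CoxeterMatrix B) :
    M.IsLiftable (fun i => rfl2 (gB M) (ee i)) := by
  intro i j
  by_cases hij : i = j
  · subst hij
    rw [M.diagonal, pow_one]
    ext v : 1
    ext1
    simp only [Module.End.mul_apply, LinearMap.comp_apply, rfl2_apply, map_sub, map_smul, gB_self, Module.End.one_apply, smul_eq_mul]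
    module
  · by_cases h0 : M i j = 0
    · simp [h0]
    · have := rot_order (gB_symm M) (M_two_le M hij h0) (gB_self M i) (gB_self M j) (gB_ee M i j)
      conv_lhs => rw [← this]
      exact pow_orderOf_eq_one _

/-- geometric representation -/
def gr (cs : CoxeterSystem M W) : W →* Module.End ℝ (B →₀ ℝ) :=
  cs.lift ⟨_, geom_liftable M⟩

theorem gr_simple (cs : CoxeterSystem M W) (i : B) : gr cs (cs.simple i) = rfl2 (gB M) (ee i) :=
  cs.lift_apply_simple (geom_liftable M) i

theorem gr_simple_apply (cs : CoxeterSystem M W) (i : B) (v : B →₀ ℝ) :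
    gr cs (cs.simple i) v = v - (2 * gB M (ee i) v) • ee i := by
  rw [gr_simple, rfl2_apply]

theorem gr_mul (cs : CoxeterSystem M W) (u w : W) (v : B →₀ ℝ) :
    gr cs (u * w) v = gr cs u (gr cs w v) := by
  rw [map_mul, Module.End.mul_apply]

theorem gr_inv_cancel (cs : CoxeterSystem M W) (w : W) (v : B →₀ ℝ) :
    gr cs w⁻¹ (gr cs w v) = v := by
  rw [← gr_mul, inv_mul_cancel, map_one, Module.End.one_apply]

theorem gr_cancel_inv (cs : CoxeterSystem M W) (w : W) (v : B →₀ ℝ) :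
    gr cs w (gr cs w⁻¹ v) = v := by
  rw [← gr_mul, mul_inv_cancel, map_one, Module.End.one_apply]

theorem gr_form (cs : CoxeterSystem M W) (w : W) (x y : B →₀ ℝ) :
    gB M (gr cs w x) (gr cs w y) = gB M x y := by
  induction w using cs.simple_induction_left with
  | one => simp
  | mul_simple_left w i ih =>
    rw [gr_mul, gr_mul, gr_simple, rfl2_inv (gB_symm M) (gB_self M i), ih]

theorem gr_conj (cs : CoxeterSystem M W) (w : W) (i : B) :
    gr cs (w * cs.simple i * w⁻¹) = rfl2 (gB M) (gr cs w (ee i)) := by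
  refine LinearMap.ext fun x => ?_
  rw [gr_mul, gr_mul, gr_simple_apply, map_sub, gr_cancel_inv, rfl2_apply, map_smul]
  congr 2
  have := gr_form cs w (ee i) (gr cs w⁻¹ x)
  rw [gr_cancel_inv] at this
  rw [this]

/-! alternating words -/
def alt (cs : CoxeterSystem M W) (i j : B) (n : ℕ) : W :=
  cs.wordProd (CoxeterSystem.alternatingWord i j n)

theorem alt_zero (cs : CoxeterSystem M W) (i j : B) : alt cs i j 0 = 1 := by
  simp [alt, CoxeterSystem.alternatingWord]

theorem alt_succ (cs : CoxeterSystem M W) (i j : B) (n : ℕ) :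
    alt cs i j (n + 1) = alt cs j i n * cs.simple j := by
  rw [alt, CoxeterSystem.alternatingWord_succ, cs.wordProd_concat, alt]

theorem decomp (cs : CoxeterSystem M W) (n : ℕ) : ∀ (w : W) (i j : B), cs.length w = n →
    cs.length w < cs.length (w * cs.simple i) →
    ∃ (v : W) (r : ℕ), w = v * alt cs i j r ∧ cs.length w = cs.length v + r ∧
      cs.length v < cs.length (v * cs.simple i) ∧ cs.length v < cs.length (v * cs.simple j) := by
  induction n using Nat.strong_induction_on with
  | _ n ih =>
    intro w i j hn hi
    by_cases hj : cs.length w < cs.length (w * cs.simple j)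
    · exact ⟨w, 0, by simp [alt_zero], by simp, hi, hj⟩
    · have h1 := cs.length_mul_simple w j
      have h2 : cs.length (w * cs.simple j) + 1 = cs.length w := by omega
      obtain ⟨v, r, e1, e2, e3, e4⟩ := ih (cs.length (w * cs.simple j)) (by omega)
        (w * cs.simple j) j i rfl (by simp; omega)
      refine ⟨v, r + 1, ?_, by omega, e4, e3⟩
      rw [alt_succ, ← mul_assoc, ← e1]; simp

theorem decomp_lt (cs : CoxeterSystem M W) {v w : W} {i j : B} {r : ℕ} (h0 : M i j ≠ 0)
    (h1 : w = v * alt cs i j r) (h2 : cs.length w = cs.length v + r)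
    (h3 : cs.length w < cs.length (w * cs.simple i)) : r + 1 ≤ M i j := by
  by_contra hlt
  have e : w * cs.simple i = v * alt cs j i (r + 1) := by
    rw [h1, alt_succ, mul_assoc]
  have h4 := cs.not_isReduced_alternatingWord j i (m := r + 1) (by rwa [M.symmetric])
    (by rw [M.symmetric]; omega)
  have h5 := cs.length_wordProd_le (CoxeterSystem.alternatingWord j i (r + 1))
  have h6 := cs.length_mul_le v (alt cs j i (r + 1))
  rw [← e] at h6
  have h7 := cs.length_mul_simple w i
  apply h4
  rw [CoxeterSystem.IsReduced]
  rw [CoxeterSystem.length_alternatingWord] at h5 ⊢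
  rw [alt] at h6
  omega

/-! abstract dihedral formula -/
def fst (i j : B) : ℕ → B
  | 0 => i
  | n + 1 => if Even n then j else i

theorem fst_swap (i j : B) (n : ℕ) : fst i j (n + 1) = fst j i n := by
  cases n with
  | zero => simp [fst]
  | succ n => simp only [fst, Nat.even_add_one]; split_ifs <;> simp_all

end geom

section dih
variable {K E : Type*} [CommRing K] [AddCommGroup E] [Module K E]

theorem pev_add {K : Type*} [CommRing K] (a b : K) (p q : A2) :
    pev a b (p + q) = pev a b p + pev a b q := by simp [pev]
theorem pev_sub {K : Type*} [CommRing K] (a b : K) (p q : A2) :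
    pev a b (p - q) = pev a b p - pev a b q := by simp [pev]
theorem pev_mul {K : Type*} [CommRing K] (a b : K) (p q : A2) :
    pev a b (p * q) = pev a b p * pev a b q := by simp [pev]
theorem pev_varX {K : Type*} [CommRing K] (a b : K) : pev a b varX = a := by simp [pev, varX]
theorem pev_varY {K : Type*} [CommRing K] (a b : K) : pev a b varY = b := by simp [pev, varY]

/-- evaluated pair -/
def qe (a b : K) : ℕ → K × K
  | 0 => (0, 0)
  | 1 => (1, 1)
  | n + 2 => (a * (qe a b (n + 1)).2 - (qe a b n).1, b * (qe a b (n + 1)).1 - (qe a b n).2)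

theorem qe_add_two (a b : K) (n : ℕ) : qe a b (n + 2) =
    (a * (qe a b (n + 1)).2 - (qe a b n).1, b * (qe a b (n + 1)).1 - (qe a b n).2) := rfl

theorem pev_qPair (a b : K) (n : ℕ) :
    (pev a b (qPair n).1 = (qe a b n).1 ∧ pev a b (qPair n).2 = (qe a b n).2) ∧
    (pev a b (qPair (n + 1)).1 = (qe a b (n + 1)).1 ∧
      pev a b (qPair (n + 1)).2 = (qe a b (n + 1)).2) := by
  induction n with
  | zero => simp [qPair, qe, pev]
  | succ n ih =>
    refine ⟨ih.2, ?_⟩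
    rw [qe_add_two, qPair]
    simp only [pev_sub, pev_mul, pev_varX, pev_varY, ih.1.1, ih.1.2, ih.2.1, ih.2.2]
    exact ⟨trivial, trivial⟩

theorem qe_swap (a b : K) (n : ℕ) : (qe b a n = ((qe a b n).2, (qe a b n).1)) ∧
    (qe b a (n + 1) = ((qe a b (n + 1)).2, (qe a b (n + 1)).1)) := by
  induction n with
  | zero => simp [qe]
  | succ n ih =>
    refine ⟨ih.2, ?_⟩
    rw [qe_add_two, qe_add_two, ih.1, ih.2]

theorem dih_formula (cs : CoxeterSystem M W) (ρ : W →* Module.End K E) (v : B → E)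
    (A : B → B → K) (hA : ∀ i, A i i = 2)
    (h : ∀ i j, ρ (cs.simple j) (v i) = v i - A j i • v j) (n : ℕ) : ∀ (i j : B),
    ρ (alt cs i j n) (v i) =
      ((-1) ^ n * (qe (A i j) (A j i) (n + 1)).2) • v (fst i j n) -
      ((-1) ^ n * (qe (A i j) (A j i) n).2) • v (fst j i n) := by
  have key : ∀ n (i j : B), ρ (alt cs i j (n + 2)) (v i) =
      - ρ (alt cs i j n) (v i) - A j i • ρ (alt cs j i (n + 1)) (v j) := by
    intro n i j
    rw [alt_succ cs i j (n + 1), map_mul, Module.End.mul_apply, h, map_sub, map_smul,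
      alt_succ cs j i n, map_mul, Module.End.mul_apply, h, hA]
    simp only [map_sub, map_smul, Module.End.mul_apply]
    module
  induction n using Nat.strong_induction_on with
  | _ n ih =>
    intro i j
    match n, ih with
    | 0, _ => simp [alt_zero, fst, qe]
    | 1, _ =>
      simp [alt_succ, alt_zero, fst, qe, h]
      abel
    | n + 2, ih =>
      rw [key, ih n (by omega), ih (n + 1) (by omega)]
      have e1 : (qe (A i j) (A j i) (n + 2 + 1)).2 = A j i * (qe (A i j) (A j i) (n + 2)).1
        - (qe (A i j) (A j i) (n + 1)).2 := rfl
      have e2 : (qe (A i j) (A j i) (n + 2)).2 = A j i * (qe (A i j) (A j i) (n + 1)).1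
        - (qe (A i j) (A j i) n).2 := rfl
      have e3 : (qe (A j i) (A i j) (n + 1 + 1)).2 = (qe (A i j) (A j i) (n + 2)).1 := by
        rw [(qe_swap (A i j) (A j i) (n + 1)).2]
      have e4 : (qe (A j i) (A i j) (n + 1)).2 = (qe (A i j) (A j i) (n + 1)).1 := by
        rw [(qe_swap (A i j) (A j i) n).2]
      rw [e1, e2, e3, e4]
      simp only [fst_swap]
      module
end dih

section pos

theorem qe_U (C : ℝ) (n : ℕ) :
    (qe (-2 * C) (-2 * C) n = ((-1) ^ (n + 1) * Useq C n, (-1) ^ (n + 1) * Useq C n)) ∧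
    (qe (-2 * C) (-2 * C) (n + 1) =
      ((-1) ^ (n + 2) * Useq C (n + 1), (-1) ^ (n + 2) * Useq C (n + 1))) := by
  induction n with
  | zero => simp [qe, Useq]
  | succ n ih =>
    refine ⟨ih.2, ?_⟩
    rw [qe_add_two, ih.1, ih.2, Useq_add_two]
    ext <;> simp only [] <;> ring

theorem gr_alt (cs : CoxeterSystem M W) (i j : B) (n : ℕ) :
    gr cs (alt cs i j n) (ee i) =
      Useq (Real.cos (Real.pi / (M i j : ℕ))) (n + 1) • ee (fst i j n) +
      Useq (Real.cos (Real.pi / (M i j : ℕ))) n • ee (fst j i n) := by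
  have := dih_formula cs (gr cs) ee (fun i j => 2 * gB M (ee i) (ee j))
    (fun i => by rw [gB_self]; norm_num) (fun i j => gr_simple_apply cs j _) n i j
  have e : 2 * gB M (ee i) (ee j) = -2 * Real.cos (Real.pi / (M i j : ℕ)) := by
    rw [gB_ee]; ring
  have e' : 2 * gB M (ee j) (ee i) = -2 * Real.cos (Real.pi / (M i j : ℕ)) := by
    rw [gB_ee, M.symmetric]; ring
  simp only [e, e'] at this
  rw [this, (qe_U _ n).1, (qe_U _ n).2]
  have h1 : ((-1 : ℝ) ^ n) * (-1) ^ n = 1 := by rw [← mul_pow]; simp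
  generalize Real.cos (Real.pi / (M i j : ℕ)) = C
  have h2 : (-1 : ℝ) ^ n * ((-1) ^ (n + 2) * Useq C (n + 1)) = Useq C (n + 1) := by
    linear_combination Useq C (n + 1) * h1
  have h3 : (-1 : ℝ) ^ n * ((-1) ^ (n + 1) * Useq C n) = - Useq C n := by
    linear_combination - Useq C n * h1
  simp only [h2, h3]
  module

theorem U_pos (M : CoxeterMatrix B) {i j : B} (hij : i ≠ j) {n : ℕ}
    (hn : M i j = 0 ∨ n < M i j) (h0 : 0 < n) :
    0 < Useq (Real.cos (Real.pi / (M i j : ℕ))) n := by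
  by_cases h : M i j = 0
  · simp [h, (Useq_one n).1, h0]
  · have h2 := M_two_le M hij h
    have hs := sin_pi_div_pos h2
    rw [(Useq_sin hs.ne' n).1]
    refine div_pos (Real.sin_pos_of_pos_of_lt_pi ?_ ?_) hs
    · have := Real.pi_pos; positivity
    · have hn' : n < M i j := by omega
      have : (n : ℝ) < M i j := by exact_mod_cast hn'
      have hM : (0 : ℝ) < M i j := by positivity
      rw [← mul_div_assoc, div_lt_iff₀ hM]
      nlinarith [Real.pi_pos]

theorem U_M (M : CoxeterMatrix B) {i j : B} (hij : i ≠ j) (h : M i j ≠ 0) :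
    Useq (Real.cos (Real.pi / (M i j : ℕ))) (M i j) = 0 := by
  have h2 := M_two_le M hij h
  have hs := sin_pi_div_pos h2
  rw [(Useq_sin hs.ne' _).1]
  have : (M i j : ℝ) ≠ 0 := by exact_mod_cast h
  rw [mul_div_cancel₀ _ this, Real.sin_pi, zero_div]

theorem U_nonneg (M : CoxeterMatrix B) {i j : B} (hij : i ≠ j) {n : ℕ}
    (hn : M i j = 0 ∨ n ≤ M i j) :
    0 ≤ Useq (Real.cos (Real.pi / (M i j : ℕ))) n := by
  rcases Nat.eq_zero_or_pos n with h0 | h0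
  · subst h0; simp [Useq]
  · by_cases h : M i j = 0
    · exact (U_pos M hij (Or.inl h) h0).le
    · rcases hn with hn | hn
      · exact absurd hn h
      · rcases hn.lt_or_eq with hn | hn
        · exact (U_pos M hij (Or.inr hn) h0).le
        · rw [hn, U_M M hij h]

def Pos (v : B →₀ ℝ) : Prop := ∀ b, 0 ≤ v b

theorem Pos.add {v w : B →₀ ℝ} (h1 : Pos v) (h2 : Pos w) : Pos (v + w) := fun b => by
  have := h1 b; have := h2 b; simp; linarith

theorem Pos.smul {v : B →₀ ℝ} (h1 : Pos v) {c : ℝ} (hc : 0 ≤ c) : Pos (c • v) := fun b => by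
  have := h1 b; simp; positivity

theorem Pos.eq_zero {v : B →₀ ℝ} (h1 : Pos v) (h2 : Pos (-v)) : v = 0 := by
  ext b
  have := h1 b; have := h2 b; simp at this ⊢; linarith

theorem pos_ee (i : B) : Pos (ee i) := fun b => by
  simp only [ee, Finsupp.single_apply]; split_ifs <;> norm_num

theorem ee_ne (i : B) : ee i ≠ 0 := by simp [ee]

theorem fst_cases (i j : B) (n : ℕ) :
    (fst i j n = i ∧ fst j i n = j) ∨ (fst i j n = j ∧ fst j i n = i) := by
  cases n with
  | zero => simp [fst]
  | succ n => simp only [fst]; split_ifs <;> simp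

/-- decomposition of an element increasing by `i` at a descent `j` -/
theorem dec (cs : CoxeterSystem M W) (w : W) (i : B) (hi : cs.length w < cs.length (w * cs.simple i))
    (hw : w ≠ 1) : ∃ (v : W) (j : B) (r : ℕ), i ≠ j ∧ w = v * alt cs i j r ∧
      cs.length w = cs.length v + r ∧ 0 < r ∧ (M i j = 0 ∨ r + 1 ≤ M i j) ∧
      cs.length v < cs.length (v * cs.simple i) ∧ cs.length v < cs.length (v * cs.simple j) := by
  obtain ⟨j, hj⟩ := cs.exists_rightDescent_of_ne_one hw
  rw [CoxeterSystem.IsRightDescent] at hj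
  have hij : i ≠ j := by rintro rfl; omega
  obtain ⟨v, r, e1, e2, e3, e4⟩ := decomp cs _ w i j rfl hi
  refine ⟨v, j, r, hij, e1, e2, ?_, ?_, e3, e4⟩
  · rcases Nat.eq_zero_or_pos r with h | h
    · subst h; rw [alt_zero, mul_one] at e1; subst e1; omega
    · exact h
  · by_cases h0 : M i j = 0
    · exact Or.inl h0
    · exact Or.inr (decomp_lt cs h0 e1 e2 hi)

theorem gr_pos (cs : CoxeterSystem M W) (n : ℕ) : ∀ (w : W) (i : B), cs.length w = n →
    cs.length w < cs.length (w * cs.simple i) → Pos (gr cs w (ee i)) := by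
  induction n using Nat.strong_induction_on with
  | _ n ih =>
    intro w i hn hi
    by_cases hw : w = 1
    · subst hw; simpa using pos_ee i
    · obtain ⟨v, j, r, hij, e1, e2, hr, hM, e3, e4⟩ := dec cs w i hi hw
      have p1 := ih (cs.length v) (by omega) v i rfl e3
      have p2 := ih (cs.length v) (by omega) v j rfl e4
      have u1 := U_nonneg M hij (n := r + 1) hM
      have u2 := U_nonneg M hij (n := r) (by omega)
      rw [e1, gr_mul, gr_alt, map_add, map_smul, map_smul]
      rcases fst_cases i j r with ⟨h1, h2⟩ | ⟨h1, h2⟩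
      · rw [h1, h2]; exact (p1.smul u1).add (p2.smul u2)
      · rw [h1, h2]; exact (p2.smul u1).add (p1.smul u2)

theorem gr_ee_neg (cs : CoxeterSystem M W) (w : W) (i : B) :
    gr cs (w * cs.simple i) (ee i) = - gr cs w (ee i) := by
  rw [gr_mul, gr_simple_apply, gB_self, ← map_neg]
  congr 1; module

theorem gr_inj' (cs : CoxeterSystem M W) (w : W) : Function.Injective (gr cs w) := fun a b h => by
  rw [← gr_inv_cancel cs w a, h, gr_inv_cancel]

theorem gr_ne (cs : CoxeterSystem M W) (w : W) (i : B) : gr cs w (ee i) ≠ 0 := by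
  intro h
  rw [← map_zero (gr cs w)] at h
  exact ee_ne i (gr_inj' cs w h)

theorem gr_neg (cs : CoxeterSystem M W) (w : W) (i : B)
    (h : cs.length (w * cs.simple i) < cs.length w) : Pos (- gr cs w (ee i)) := by
  rw [← gr_ee_neg]
  exact gr_pos cs _ _ _ rfl (by simpa using h)

theorem gr_pos_iff (cs : CoxeterSystem M W) (w : W) (i : B) :
    Pos (gr cs w (ee i)) ↔ cs.length w < cs.length (w * cs.simple i) := by
  refine ⟨fun h => ?_, gr_pos cs _ w i rfl⟩
  by_contra h2
  have h3 := cs.length_mul_simple w i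
  exact gr_ne cs w i (h.eq_zero (gr_neg cs w i (by omega)))

theorem gr_pos_or (cs : CoxeterSystem M W) (w : W) (i : B) :
    Pos (gr cs w (ee i)) ∨ Pos (- gr cs w (ee i)) := by
  have h3 := cs.length_mul_simple w i
  by_cases h : cs.length w < cs.length (w * cs.simple i)
  · exact Or.inl (gr_pos cs _ w i rfl h)
  · exact Or.inr (gr_neg cs w i (by omega))

theorem gr_faithful (cs : CoxeterSystem M W) : Function.Injective (gr cs) := by
  rw [injective_iff_map_eq_one]
  intro w h
  by_contra hw
  obtain ⟨j, hj⟩ := cs.exists_rightDescent_of_ne_one hw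
  have := gr_neg cs w j hj
  rw [h] at this
  exact ee_ne j ((pos_ee j).eq_zero this)

theorem order_simple (cs : CoxeterSystem M W) {i j : B} (hij : i ≠ j) (h0 : M i j ≠ 0) :
    orderOf (cs.simple i * cs.simple j) = M i j := by
  rw [← orderOf_injective _ (gr_faithful cs), map_mul, gr_simple, gr_simple]
  exact rot_order (gB_symm M) (M_two_le M hij h0) (gB_self M i) (gB_self M j) (gB_ee M i j)

/-- a simple reflection moves only one positive root to a negative one -/
theorem simple_pos (cs : CoxeterSystem M W) (w : W) (i j : B) (h : Pos (gr cs w (ee i)))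
    (h2 : ¬ Pos (gr cs (cs.simple j * w) (ee i))) : gr cs w (ee i) = ee j := by
  have h3 := (gr_pos_or cs (cs.simple j * w) i).resolve_left h2
  have h4 := gr_form cs w (ee i) (ee i)
  rw [gr_mul, gr_simple_apply] at h3
  rw [gB_self] at h4
  generalize gr cs w (ee i) = γ at *
  have h5 : γ = γ j • ee j := by
    ext b
    by_cases hb : b = j
    · subst hb; simp [ee]
    · have := h3 b
      have h6 := h b
      simp [ee, Finsupp.single_apply, hb, Ne.symm hb] at this ⊢
      linarith
  have h6 := h j
  rw [h5] at h4
  simp only [map_smul, LinearMap.smul_apply, gB_self, smul_eq_mul, mul_one] at h4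
  have : γ j = 1 := by nlinarith
  rw [h5, this, one_smul]

theorem conj_of_eq (cs : CoxeterSystem M W) {w w' : W} {i j : B}
    (h : gr cs w (ee i) = gr cs w' (ee j) ∨ gr cs w (ee i) = - gr cs w' (ee j)) :
    w * cs.simple i * w⁻¹ = w' * cs.simple j * w'⁻¹ := by
  apply gr_faithful cs
  rw [gr_conj, gr_conj]
  rcases h with h | h
  · rw [h]
  · rw [h]
    refine LinearMap.ext fun x => ?_
    rw [rfl2_apply, rfl2_apply]
    simp

/-- strong exchange -/
theorem exchange (cs : CoxeterSystem M W) (w : W) (i : B) (hw : Pos (gr cs w (ee i))) (x : W)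
    (h : Pos (- gr cs (x * w) (ee i))) :
    cs.length (x * (w * cs.simple i * w⁻¹)) < cs.length x := by
  obtain ⟨ω, hω, rfl⟩ := cs.exists_isReduced x
  rw [CoxeterSystem.IsReduced] at hω
  rw [hω]
  clear hω
  induction ω with
  | nil =>
    simp at h
    exact absurd (hw.eq_zero h) (gr_ne cs w i)
  | cons a ω ih =>
    rw [cs.wordProd_cons] at h ⊢
    by_cases hp : Pos (- gr cs (cs.wordProd ω * w) (ee i))
    · have := ih hp
      have h1 := cs.length_simple_mul (cs.wordProd ω * (w * cs.simple i * w⁻¹)) a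
      rw [mul_assoc (cs.simple a)]
      simp only [List.length_cons]
      omega
    · have hp' := (gr_pos_or cs (cs.wordProd ω * w) i).resolve_right hp
      rw [mul_assoc] at h
      have h3 := simple_pos cs (cs.wordProd ω * w) i a hp' (fun h5 => gr_ne cs _ i (h5.eq_zero h))
      have h4 := conj_of_eq cs (w := cs.wordProd ω * w) (w' := 1) (i := i) (j := a)
        (Or.inl (by simpa using h3))
      have h5 : cs.simple a * cs.wordProd ω * (w * cs.simple i * w⁻¹) = cs.wordProd ω := by
        have h6 : cs.wordProd ω * (w * cs.simple i * w⁻¹) = cs.simple a * cs.wordProd ω := by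
          rw [one_mul, inv_one, mul_one] at h4
          rw [← h4]; group
        rw [mul_assoc, h6, ← mul_assoc]; simp
      rw [h5]
      have := cs.length_wordProd_le ω
      simp only [List.length_cons]
      omega
end pos

section angle

theorem canon_mem {cs : CoxeterSystem M W} {A : Set W} {t : W} (h : t ∈ canonicalGens cs A) : t ∈ A := by
  have : t ∈ ({t} : Set W) := rfl
  rw [← h.2] at this
  exact this.2

theorem canon_pos {cs : CoxeterSystem M W} {A : Set W} {t : W} (h : t ∈ canonicalGens cs A) {u : W} {a : B}
    (hA : u * cs.simple a * u⁻¹ ∈ A) (hne : u * cs.simple a * u⁻¹ ≠ t)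
    (hp : Pos (gr cs u (ee a))) : Pos (gr cs t (gr cs u (ee a))) := by
  by_contra hn
  rw [← gr_mul] at hn
  have h1 := exchange cs u a hp t ((gr_pos_or cs _ a).resolve_left hn)
  have : u * cs.simple a * u⁻¹ ∈ ({t} : Set W) := by
    rw [← h.2]
    exact ⟨⟨⟨u, a, rfl⟩, h1⟩, hA⟩
  exact hne this

theorem rfl2_self {E : Type*} [AddCommGroup E] [Module ℝ E] (Φ : E →ₗ[ℝ] E →ₗ[ℝ] ℝ) {a : E} (ha : Φ a a = 1) : rfl2 Φ a a = -a := by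
  rw [rfl2_apply, ha]; module

theorem gram_indep0 {E : Type*} [AddCommGroup E] [Module ℝ E] {Φ : E →ₗ[ℝ] E →ₗ[ℝ] ℝ} {a b : E} {C : ℝ}
    (ha : Φ a a = 1) (hb : Φ b b = 1) (hab : Φ a b = -C)
    (hba : Φ b a = -C) (hC : 1 - C ^ 2 ≠ 0) {p q : ℝ} (h : p • a + q • b = 0) : p = 0 ∧ q = 0 :=
  gram_indep ha hb hab hba hC (by rw [h, map_zero]) (by rw [h, map_zero])

theorem angle (cs : CoxeterSystem M W) (W' : Subgroup W) {s t w1 w2 : W} {i1 i2 : B}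
    (hs : s ∈ canonicalGens cs (W' : Set W)) (ht : t ∈ canonicalGens cs (W' : Set W))
    (es : s = w1 * cs.simple i1 * w1⁻¹) (et : t = w2 * cs.simple i2 * w2⁻¹)
    (p1 : Pos (gr cs w1 (ee i1))) (p2 : Pos (gr cs w2 (ee i2))) (hne : s ≠ t)
    (ho : orderOf (s * t) ≠ 0) :
    2 ≤ orderOf (s * t) ∧ gB M (gr cs w1 (ee i1)) (gr cs w2 (ee i2)) =
      -Real.cos (Real.pi / (orderOf (s * t) : ℕ)) := by
  set a := gr cs w1 (ee i1) with ha
  set b := gr cs w2 (ee i2) with hb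
  have na : a ≠ 0 := gr_ne cs _ _
  have nb : b ≠ 0 := gr_ne cs _ _
  have haa : gB M a a = 1 := by rw [ha, gr_form, gB_self]
  have hbb : gB M b b = 1 := by rw [hb, gr_form, gB_self]
  obtain ⟨C, hC⟩ : ∃ C, gB M a b = -C := ⟨-gB M a b, by ring⟩
  have hC' : gB M b a = -C := by rw [gB_symm, hC]
  have gs : gr cs s = rfl2 (gB M) a := by rw [es, gr_conj]
  have gt : gr cs t = rfl2 (gB M) b := by rw [et, gr_conj]
  have hpow := rot_pow haa hbb hC hC'
  have gc : ∀ n, gr cs ((s * t) ^ n) = (rfl2 (gB M) a * rfl2 (gB M) b) ^ n := fun n => by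
    rw [map_pow, map_mul, gs, gt]
  have hC1 : |C| < 1 := by
    by_contra hC1
    push Not at hC1
    have h1 := (hpow (orderOf (s * t))).1
    rw [← gc, pow_orderOf_eq_one, map_one, Module.End.one_apply] at h1
    have hU : Useq C (2 * orderOf (s * t)) ≠ 0 := by
      obtain ⟨m, hm⟩ := Nat.exists_eq_succ_of_ne_zero (n := 2 * orderOf (s * t)) (by omega)
      rw [hm]; exact Useq_ne hC1 m
    generalize Useq C (2 * orderOf (s * t)) = q at *
    generalize Useq C (2 * orderOf (s * t) + 1) = p at *
    have h2 : b = ((1 - p) / q) • a := by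
      have : q • b = (1 - p) • a := by
        rw [sub_smul, one_smul]; exact (sub_eq_iff_eq_add'.2 h1).symm
      rw [div_eq_inv_mul, mul_smul, ← this, smul_smul, inv_mul_cancel₀ hU, one_smul]
    generalize (1 - p) / q = l at *
    have h3 : l ^ 2 = 1 := by
      rw [h2] at hbb
      simp only [map_smul, LinearMap.smul_apply, haa, smul_eq_mul] at hbb
      linarith
    have h4 : a = b ∨ a = -b := by
      rcases mul_eq_zero.mp (show (l - 1) * (l + 1) = 0 by linear_combination h3) with h | h
      · left; rw [h2, sub_eq_zero.mp h, one_smul]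
      · right; rw [h2, eq_neg_of_add_eq_zero_left h]; module
    exact hne (by rw [es, et]; exact conj_of_eq cs h4)
  have hCsq : 1 - C ^ 2 ≠ 0 := by
    have := (sq_lt_one_iff_abs_lt_one C).2 hC1
    linarith
  have sW : s ∈ W' := canon_mem hs
  have tW : t ∈ W' := canon_mem ht
  have sa : gr cs s a = -a := by rw [gs]; exact rfl2_self _ haa
  have tb : gr cs t b = -b := by rw [gt]; exact rfl2_self _ hbb
  have sb : Pos (gr cs s b) := canon_pos hs (by rw [← et]; exact tW) (by rw [← et]; exact hne.symm) p2
  have ta : Pos (gr cs t a) := canon_pos ht (by rw [← es]; exact sW) (by rw [← es]; exact hne) p1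
  have key0 : ∀ (u : W) (c : B) (p q : ℝ), u * cs.simple c * u⁻¹ ∈ W' →
      gr cs u (ee c) = p • a - q • b → 0 < p → 0 < q → False := by
    intro u c p q hu hg hp hq
    set γ := gr cs u (ee c) with hγ
    have hγγ : gB M γ γ = 1 := by rw [hγ, gr_form, gB_self]
    have gu : gr cs (u * cs.simple c * u⁻¹) = rfl2 (gB M) γ := gr_conj cs u c
    have ne1 : u * cs.simple c * u⁻¹ ≠ s := by
      intro h
      rw [h, gs] at gu
      have h1 := rfl2_self _ hγγ
      rw [← gu, rfl2_apply] at h1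
      have h2 := gram_indep0 haa hbb hC hC' hCsq (p := p - gB M a γ) (q := -q) (by
        have : (2:ℝ) • (γ - gB M a γ • a) = 0 := by
          have h3 : γ - (2 * gB M a γ) • a + γ = 0 := by rw [h1]; simp
          rw [← h3]; module
        have h4 := (smul_eq_zero.mp this).resolve_left (by norm_num)
        rw [← h4, sub_eq_add_neg γ]; nth_rewrite 2 [hg]; module)
      linarith [h2.2]
    have ne2 : u * cs.simple c * u⁻¹ ≠ t := by
      intro h
      rw [h, gt] at gu
      have h1 := rfl2_self _ hγγ
      rw [← gu, rfl2_apply] at h1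
      have h2 := gram_indep0 haa hbb hC hC' hCsq (p := p) (q := -q - gB M b γ) (by
        have : (2:ℝ) • (γ - gB M b γ • b) = 0 := by
          have h3 : γ - (2 * gB M b γ) • b + γ = 0 := by rw [h1]; simp
          rw [← h3]; module
        have h4 := (smul_eq_zero.mp this).resolve_left (by norm_num)
        rw [← h4, sub_eq_add_neg γ]; nth_rewrite 2 [hg]; module)
      linarith [h2.1]
    rcases gr_pos_or cs u c with h | h
    · have h1 := canon_pos hs hu ne1 h
      have h2 : Pos (-a) := by
        have h3 := (h1.add (sb.smul hq.le)).smul (inv_nonneg.2 hp.le)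
        rw [← hγ, hg, map_sub, map_smul, map_smul, sa, sub_add_cancel, smul_smul,
          inv_mul_cancel₀ hp.ne', one_smul] at h3
        exact h3
      exact na (p1.eq_zero h2)
    · rw [← gr_ee_neg] at h
      have hr : u * cs.simple c * cs.simple c * (u * cs.simple c)⁻¹ = u * cs.simple c * u⁻¹ := by
        simp [mul_assoc]
      have h1 := canon_pos ht (u := u * cs.simple c) (a := c) (by rw [hr]; exact hu)
        (by rw [hr]; exact ne2) h
      have h2 : Pos (-b) := by
        have h3 := (h1.add (ta.smul hp.le)).smul (inv_nonneg.2 hq.le)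
        rw [gr_ee_neg, ← hγ, hg, map_neg, map_sub, map_smul, map_smul, tb, neg_sub, sub_add_cancel,
          smul_smul, inv_mul_cancel₀ hq.ne', one_smul] at h3
        exact h3
      exact nb (p2.eq_zero h2)
  have key : ∀ (u : W) (c : B) (p q : ℝ), u * cs.simple c * u⁻¹ ∈ W' →
      gr cs u (ee c) = p • a + q • b → 0 ≤ p * q := by
    intro u c p q hu hg
    by_contra hlt
    push Not at hlt
    rcases mul_neg_iff.mp hlt with ⟨hp, hq⟩ | ⟨hp, hq⟩
    · exact key0 u c p (-q) hu (by rw [hg]; module) hp (by linarith)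
    · have hr : u * cs.simple c * cs.simple c * (u * cs.simple c)⁻¹ = u * cs.simple c * u⁻¹ := by
        simp [mul_assoc]
      exact key0 (u * cs.simple c) c (-p) q (by rw [hr]; exact hu)
        (by rw [gr_ee_neg, hg]; module) (by linarith) hq
  have keyU : ∀ n, 0 ≤ Useq C n * Useq C (n + 1) := by
    intro n
    have hcW : ∀ k, (s * t) ^ k ∈ W' := fun k => W'.pow_mem (W'.mul_mem sW tW) k
    rcases Nat.even_or_odd' n with ⟨k, hk | hk⟩
    · subst hk
      rw [mul_comm]
      refine key ((s * t) ^ k * w1) i1 _ _ ?_ ?_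
      · have : (s * t) ^ k * w1 * cs.simple i1 * ((s * t) ^ k * w1)⁻¹ = (s * t) ^ k * s * ((s * t) ^ k)⁻¹ := by
          rw [es]; group
        rw [this]
        exact W'.mul_mem (W'.mul_mem (hcW k) sW) (W'.inv_mem (hcW k))
      · rw [gr_mul, ← ha, gc, (hpow k).1]
    · subst hk
      rw [mul_comm]
      refine key ((s * t) ^ k * (s * w2)) i2 _ _ ?_ ?_
      · have : (s * t) ^ k * (s * w2) * cs.simple i2 * ((s * t) ^ k * (s * w2))⁻¹
            = (s * t) ^ k * (s * t * s⁻¹) * ((s * t) ^ k)⁻¹ := by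
          rw [et]; group
        rw [this]
        exact W'.mul_mem (W'.mul_mem (hcW k) (W'.mul_mem (W'.mul_mem sW tW) (W'.inv_mem sW))) (W'.inv_mem (hcW k))
      · rw [gr_mul, gr_mul, ← hb, gs, rfl2_apply, hC, gc, map_sub, map_smul, (hpow k).1, (hpow k).2]
        rw [Useq_add_two]
        cases k with
        | zero => simp [Useq]; module
        | succ k =>
          module
  obtain ⟨θ, h0, hpi, hθ⟩ : ∃ θ, 0 < θ ∧ θ < Real.pi ∧ Real.cos θ = C := by
    rw [abs_lt] at hC1
    refine ⟨Real.arccos C, Real.arccos_pos.2 hC1.2, ?_, Real.cos_arccos hC1.1.le hC1.2.le⟩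
    refine lt_of_le_of_ne (Real.arccos_le_pi _) ?_
    rw [Ne, Real.arccos_eq_pi]; linarith
  have hsin : 0 < Real.sin θ := Real.sin_pos_of_pos_of_lt_pi h0 hpi
  have hN : ∃ N : ℕ, 2 ≤ N ∧ N * θ = Real.pi := by
    have hN0 : 1 < ⌈Real.pi / θ⌉₊ := by
      rw [Nat.lt_ceil]; simp [lt_div_iff₀ h0, hpi]
    obtain ⟨m, hm⟩ := Nat.exists_eq_succ_of_ne_zero (n := ⌈Real.pi / θ⌉₊) (by omega)
    have hle := Nat.le_ceil (Real.pi / θ)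
    have hlt : (m : ℝ) < Real.pi / θ := by
      rw [← Nat.lt_ceil]; omega
    rw [hm] at hle hN0
    rw [div_le_iff₀ h0] at hle
    rw [lt_div_iff₀ h0] at hlt
    refine ⟨m + 1, by omega, ?_⟩
    by_contra hne
    have hgt : Real.pi < (m + 1 : ℕ) * θ := lt_of_le_of_ne hle (Ne.symm hne)
    have hk := keyU m
    rw [← hθ, (Useq_sin hsin.ne' m).1, (Useq_sin hsin.ne' (m + 1)).1] at hk
    have hm0 : (0 : ℝ) < m := by exact_mod_cast (by omega : 0 < m)
    have s1 : 0 < Real.sin (m * θ) := Real.sin_pos_of_pos_of_lt_pi (by positivity) hlt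
    have s2 : Real.sin ((m + 1 : ℕ) * θ) < 0 := by
      have : Real.sin ((m + 1 : ℕ) * θ) = - Real.sin ((m + 1 : ℕ) * θ - Real.pi) := by
        rw [Real.sin_sub_pi]; simp
      rw [this, neg_lt_zero]
      refine Real.sin_pos_of_pos_of_lt_pi (by linarith) ?_
      push_cast; nlinarith
    have : Real.sin (m * θ) / Real.sin θ * (Real.sin ((m + 1 : ℕ) * θ) / Real.sin θ) < 0 :=
      mul_neg_of_pos_of_neg (by positivity) (div_neg_of_neg_of_pos s2 hsin)
    linarith
  obtain ⟨N, hN2, hNθ⟩ := hN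
  have hθ' : θ = Real.pi / N := by
    have : (N : ℝ) ≠ 0 := by positivity
    field_simp; linarith
  have hab : gB M a b = -Real.cos (Real.pi / N) := by rw [hC, ← hθ, hθ']
  have hord : orderOf (s * t) = N := by
    rw [← orderOf_injective _ (gr_faithful cs), map_mul, gs, gt]
    exact rot_order (gB_symm M) hN2 haa hbb hab
  rw [hord]
  exact ⟨hN2, hab⟩
end angle

section shrink

/-- positive roots sent to non-positive vectors form a finite set -/
theorem inv_finite (cs : CoxeterSystem M W) (x : W) :
    {ρ : B →₀ ℝ | (∃ w i, ρ = gr cs w (ee i)) ∧ Pos ρ ∧ ¬ Pos (gr cs x ρ)}.Finite := by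
  induction x using cs.simple_induction_left with
  | one =>
    convert Set.finite_empty
    ext ρ; simp
  | mul_simple_left x j ih =>
    refine (ih.union (Set.finite_singleton (gr cs x⁻¹ (ee j)))).subset ?_
    rintro ρ ⟨⟨w, i, rfl⟩, h1, h2⟩
    by_cases h3 : Pos (gr cs x (gr cs w (ee i)))
    · right
      rw [← gr_mul] at h3 h2
      rw [mul_assoc] at h2
      have := simple_pos cs (x * w) i j h3 h2
      rw [Set.mem_singleton_iff, ← this, gr_mul, gr_inv_cancel]
    · left; exact ⟨⟨w, i, rfl⟩, h1, h3⟩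

def FN (cs : CoxeterSystem M W) (f : (B →₀ ℝ) →ₗ[ℝ] ℝ) : Set (B →₀ ℝ) :=
  {ρ : B →₀ ℝ | (∃ w i, ρ = gr cs w (ee i)) ∧ Pos ρ ∧ f ρ < 0}

theorem straighten (cs : CoxeterSystem M W) (J : Set B) (n : ℕ) :
    ∀ f : (B →₀ ℝ) →ₗ[ℝ] ℝ, (FN cs f).Finite → (FN cs f).ncard = n →
    ∃ u ∈ Subgroup.closure (cs.simple '' J), ∀ i ∈ J, 0 ≤ f (gr cs u⁻¹ (ee i)) := by
  induction n using Nat.strong_induction_on with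
  | _ n ih =>
    intro f hf hn
    by_cases h : ∀ i ∈ J, 0 ≤ f (ee i)
    · exact ⟨1, one_mem _, by simpa using h⟩
    · push Not at h
      obtain ⟨i, hi, hneg⟩ := h
      have hei : ee i ∈ FN cs f := ⟨⟨1, i, by simp⟩, pos_ee i, hneg⟩
      have hss : ∀ v, gr cs (cs.simple i) (gr cs (cs.simple i) v) = v := fun v => by
        rw [← gr_mul]; simp
      have hsub : gr cs (cs.simple i) '' FN cs (f ∘ₗ gr cs (cs.simple i)) ⊆ FN cs f \ {ee i} := by
        rintro _ ⟨ρ, ⟨⟨w, a, rfl⟩, h1, h2⟩, rfl⟩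
        rw [LinearMap.comp_apply] at h2
        refine ⟨⟨⟨cs.simple i * w, a, by rw [gr_mul]⟩, ?_, h2⟩, ?_⟩
        · by_contra h3
          rw [← gr_mul] at h3
          have := simple_pos cs w a i h1 h3
          rw [this, gr_simple_apply, gB_self] at h2
          simp at h2; linarith
        · intro h3
          rw [Set.mem_singleton_iff] at h3
          have h4 : gr cs w (ee a) = - ee i := by
            rw [← hss (gr cs w (ee a)), h3, gr_simple_apply, gB_self]; module
          rw [h4] at h1
          exact ee_ne i ((pos_ee i).eq_zero h1)
      have hfin := (hf.diff (t := {ee i})).subset hsub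
      have hfin' := hfin.of_finite_image (gr_inj' cs _).injOn
      have hc : (FN cs (f ∘ₗ gr cs (cs.simple i))).ncard < n := by
        rw [← hn, ← Set.ncard_image_of_injective _ (gr_inj' cs (cs.simple i))]
        refine lt_of_le_of_lt (Set.ncard_le_ncard hsub hf.diff) ?_
        exact Set.ncard_diff_singleton_lt_of_mem hei hf
      obtain ⟨u, hu, hu2⟩ := ih _ hc (f ∘ₗ gr cs (cs.simple i)) hfin' rfl
      refine ⟨u * cs.simple i, mul_mem hu (Subgroup.subset_closure ⟨i, hi, rfl⟩), fun b hb => ?_⟩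
      have := hu2 b hb
      rw [LinearMap.comp_apply] at this
      rwa [mul_inv_rev, gr_mul, cs.inv_simple]

def Sp (J : Finset B) (v : B →₀ ℝ) : Prop := ∀ b, b ∉ J → v b = 0

theorem Sp.eq {J : Finset B} {v : B →₀ ℝ} (h : Sp J v) : v = ∑ i ∈ J, v i • ee i := by
  ext b
  simp only [Finsupp.coe_finset_sum, Finset.sum_apply, ee, Finsupp.smul_apply, smul_eq_mul,
    Finsupp.single_apply, mul_ite, mul_one, mul_zero, Finset.sum_ite_eq']
  split_ifs with hb
  · rfl
  · exact h b hb

theorem Sp.add {J : Finset B} {v w : B →₀ ℝ} (h : Sp J v) (h' : Sp J w) : Sp J (v + w) :=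
  fun b hb => by simp [h b hb, h' b hb]
theorem Sp.sub {J : Finset B} {v w : B →₀ ℝ} (h : Sp J v) (h' : Sp J w) : Sp J (v - w) :=
  fun b hb => by simp [h b hb, h' b hb]
theorem Sp.smul {J : Finset B} {v : B →₀ ℝ} (h : Sp J v) (c : ℝ) : Sp J (c • v) :=
  fun b hb => by simp [h b hb]
theorem Sp_ee {J : Finset B} {i : B} (h : i ∈ J) : Sp J (ee i) := fun b hb => by
  have : i ≠ b := by rintro rfl; exact hb h
  simp [ee, Finsupp.single_apply, this]

theorem Sp_closure (cs : CoxeterSystem M W) (J : Finset B) {u : W}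
    (hu : u ∈ Subgroup.closure (cs.simple '' (J : Set B))) {v : B →₀ ℝ} (hv : Sp J v) :
    Sp J (gr cs u v) := by
  induction hu using Subgroup.closure_induction_left generalizing v with
  | one => simpa
  | mul_left x hx y hy ih =>
    obtain ⟨i, hi, rfl⟩ := hx
    rw [gr_mul, gr_simple_apply]
    exact (ih hv).sub ((Sp_ee hi).smul _)
  | inv_mul_cancel x hx y hy ih =>
    obtain ⟨i, hi, rfl⟩ := hx
    rw [cs.inv_simple, gr_mul, gr_simple_apply]
    exact (ih hv).sub ((Sp_ee hi).smul _)

theorem shrink (cs : CoxeterSystem M W) (J : Finset B) (f : (B →₀ ℝ) →ₗ[ℝ] ℝ)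
    (hf : (FN cs f).Finite) (hne : ∃ v, Sp J v ∧ f v ≠ 0) :
    ∃ u ∈ Subgroup.closure (cs.simple '' (J : Set B)), ∃ J' : Finset B, J' ⊂ J ∧
      ∀ w i, Sp J (gr cs w (ee i)) → f (gr cs w (ee i)) = 0 → Sp J' (gr cs (u * w) (ee i)) := by
  obtain ⟨u, hu, h0⟩ := straighten cs (J : Set B) _ f hf rfl
  refine ⟨u, hu, J.filter (fun i => f (gr cs u⁻¹ (ee i)) = 0), ?_, ?_⟩
  · rw [Finset.filter_ssubset]
    by_contra hcon
    push Not at hcon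
    obtain ⟨v, hv, hfv⟩ := hne
    apply hfv
    have h1 := (Sp_closure cs J hu hv).eq
    rw [← gr_inv_cancel cs u v, h1, map_sum, map_sum]
    refine Finset.sum_eq_zero fun i hi => ?_
    rw [map_smul, map_smul, hcon i hi, smul_zero]
  · intro w i hw hfw
    have h1 : Sp J (gr cs (u * w) (ee i)) := by rw [gr_mul]; exact Sp_closure cs J hu hw
    have h2 : ∑ b ∈ J, gr cs (u * w) (ee i) b * f (gr cs u⁻¹ (ee b)) = 0 := by
      rw [← gr_inv_cancel cs u (gr cs w (ee i)), ← gr_mul cs u, h1.eq, map_sum, map_sum] at hfw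
      rw [← hfw]
      refine Finset.sum_congr rfl fun b hb => ?_
      rw [map_smul, map_smul, smul_eq_mul]
    have h3 : ∀ b ∈ J, gr cs (u * w) (ee i) b * f (gr cs u⁻¹ (ee b)) = 0 := by
      rcases gr_pos_or cs (u * w) i with hp | hp
      · exact (Finset.sum_eq_zero_iff_of_nonneg (fun b hb => mul_nonneg (hp b) (h0 b hb))).1 h2
      · refine (Finset.sum_eq_zero_iff_of_nonpos
          (fun b hb => mul_nonpos_of_nonpos_of_nonneg ?_ (h0 b hb))).1 h2
        have := hp b
        rw [Finsupp.neg_apply] at this; linarith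
    intro b hb
    rw [Finset.mem_filter] at hb
    by_cases hbJ : b ∈ J
    · exact (mul_eq_zero.mp (h3 b hbJ)).resolve_right (fun h => hb ⟨hbJ, h⟩)
    · exact h1 b hbJ

/-- averaged functional -/
def avg (cs : CoxeterSystem M W) (c : W) (N : ℕ) (b : B) : (B →₀ ℝ) →ₗ[ℝ] ℝ :=
  ∑ n ∈ Finset.range N, (Finsupp.lapply b : (B →₀ ℝ) →ₗ[ℝ] ℝ) ∘ₗ gr cs (c ^ n)

theorem avg_apply (cs : CoxeterSystem M W) (c : W) (N : ℕ) (b : B) (v : B →₀ ℝ) :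
    avg cs c N b v = ∑ n ∈ Finset.range N, gr cs (c ^ n) v b := by
  simp [avg]

theorem avg_fin (cs : CoxeterSystem M W) (c : W) (N : ℕ) (b : B) : (FN cs (avg cs c N b)).Finite := by
  refine ((Finset.range N).finite_toSet.biUnion (fun n _ => inv_finite cs (c ^ n))).subset ?_
  rintro ρ ⟨h1, h2, h3⟩
  rw [avg_apply] at h3
  obtain ⟨n, hn, hlt⟩ := Finset.exists_lt_of_sum_lt (s := Finset.range N) (f := fun n => gr cs (c ^ n) ρ b) (g := fun _ => (0:ℝ))
    (by rw [Finset.sum_const_zero]; exact h3)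
  simp only [Set.mem_iUnion]
  exact ⟨n, hn, h1, h2, fun h => absurd (h b) (not_le.2 hlt)⟩

theorem avg_inv (cs : CoxeterSystem M W) (c : W) (N : ℕ) (hc : c ^ N = 1) (b : B) (v : B →₀ ℝ) :
    avg cs c N b (gr cs c v) = avg cs c N b v := by
  rw [avg_apply, avg_apply]
  have h1 := Finset.sum_range_succ (fun n => gr cs (c ^ n) v b) N
  have h2 := Finset.sum_range_succ' (fun n => gr cs (c ^ n) v b) N
  rw [h1, hc] at h2
  simp only [pow_zero] at h2
  have h3 := add_right_cancel h2
  rw [h3]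
  refine Finset.sum_congr rfl fun n _ => ?_
  rw [← gr_mul, pow_succ]

end shrink

section reduce

theorem reduce2 (cs : CoxeterSystem M W) {C : ℝ} (hC : 1 - C ^ 2 ≠ 0) {N : ℕ} (hN : N ≠ 0) (n : ℕ) :
    ∀ (J : Finset B) (w1 w2 : W) (i1 i2 : B), J.card = n →
    Sp J (gr cs w1 (ee i1)) → Sp J (gr cs w2 (ee i2)) →
    gB M (gr cs w1 (ee i1)) (gr cs w2 (ee i2)) = -C →
    ((w1 * cs.simple i1 * w1⁻¹) * (w2 * cs.simple i2 * w2⁻¹)) ^ N = 1 →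
    ∃ (x : W) (J' : Finset B), J'.card ≤ 2 ∧ Sp J' (gr cs (x * w1) (ee i1)) ∧
      Sp J' (gr cs (x * w2) (ee i2)) := by
  induction n using Nat.strong_induction_on with
  | _ n ih =>
    intro J w1 w2 i1 i2 hJ ha' hb' hab' hc
    by_cases hn : J.card ≤ 2
    · exact ⟨1, J, hn, by simpa using ha', by simpa using hb'⟩
    · set c := (w1 * cs.simple i1 * w1⁻¹) * (w2 * cs.simple i2 * w2⁻¹) with hcdef
      have gc : gr cs c = rfl2 (gB M) (gr cs w1 (ee i1)) * rfl2 (gB M) (gr cs w2 (ee i2)) := by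
        rw [hcdef, map_mul, gr_conj, gr_conj]
      have haa' : gB M (gr cs w1 (ee i1)) (gr cs w1 (ee i1)) = 1 := by rw [gr_form, gB_self]
      have hbb' : gB M (gr cs w2 (ee i2)) (gr cs w2 (ee i2)) = 1 := by rw [gr_form, gB_self]
      obtain ⟨a, ha⟩ : ∃ a, a = gr cs w1 (ee i1) := ⟨_, rfl⟩
      obtain ⟨b, hb⟩ : ∃ b, b = gr cs w2 (ee i2) := ⟨_, rfl⟩
      have ha1 := ha'
      have hb1 := hb'
      have hab := hab'
      rw [← ha, ← hb] at gc
      rw [← ha] at haa' ha1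
      rw [← hb] at hbb' hb1
      rw [← ha, ← hb] at hab
      have hba : gB M b a = -C := by rw [gB_symm, hab]
      have hpow := rot_pow haa' hbb' hab hba 1
      have kill : ∀ l, avg cs c N l a = 0 ∧ avg cs c N l b = 0 := by
        intro l
        have k1 := avg_inv cs c N hc l a
        have k2 := avg_inv cs c N hc l b
        rw [pow_one] at hpow
        rw [gc, hpow.1] at k1
        rw [gc, hpow.2] at k2
        simp only [map_add, map_smul, smul_eq_mul, Useq, mul_one, Nat.reduceAdd] at k1 k2
        have e1 : Useq C 0 = 0 := rfl
        generalize avg cs c N l a = A at *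
        generalize avg cs c N l b = D at *
        have e1 : D = - C * A := by linarith
        subst e1
        have e2 : (1 - C ^ 2) * A = 0 := by linarith
        have e3 := (mul_eq_zero.mp e2).resolve_left hC
        simp [e3]
      have hex : ∃ l, ∃ v, Sp J v ∧ avg cs c N l v ≠ 0 := by
        by_contra hcon
        push Not at hcon
        apply hn
        have hQ : ∀ v, ∃ p q : ℝ, ∀ l, avg cs c N l v = ((N : ℝ) • v + (p • a + q • b)) l := by
          intro v
          choose p q hpq using fun n => rot_sub (gB M) a b n v
          refine ⟨∑ n ∈ Finset.range N, p n, ∑ n ∈ Finset.range N, q n, fun l => ?_⟩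
          rw [avg_apply]
          simp only [map_pow, gc, hpq]
          simp [Finset.sum_add_distrib, Finset.sum_mul]
        have hspan : ∀ v, Sp J v → v ∈ Submodule.span ℝ ({a, b} : Set (B →₀ ℝ)) := by
          intro v hv
          obtain ⟨p, q, hpq⟩ := hQ v
          have h0 : (N : ℝ) • v + (p • a + q • b) = 0 := by
            ext l
            rw [← hpq, hcon l v hv]; rfl
          have hN' : (N : ℝ) ≠ 0 := by exact_mod_cast hN
          rw [Submodule.mem_span_pair]
          refine ⟨-p / N, -q / N, ?_⟩
          have h1 : v = (N : ℝ)⁻¹ • ((N : ℝ) • v) := by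
            rw [smul_smul, inv_mul_cancel₀ hN', one_smul]
          rw [h1, eq_neg_of_add_eq_zero_left h0]
          module
        have hli : LinearIndependent ℝ (fun i : J => (ee (i : B) : B →₀ ℝ)) :=
          (Finsupp.linearIndependent_single_one ℝ B).comp _ Subtype.val_injective
        have := linearIndependent_le_span' _ hli (({a, b} : Finset (B →₀ ℝ)) : Set (B →₀ ℝ)) (by
          rintro _ ⟨i, rfl⟩
          simpa using hspan _ (Sp_ee i.2))
        have h2 : (({a, b} : Finset (B →₀ ℝ)).card) ≤ 2 := Finset.card_le_two
        simp only [Cardinal.mk_coe_finset, Finset.coe_sort_coe, Fintype.card_coe, Nat.cast_le] at this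
        omega
      obtain ⟨l, hv⟩ := hex
      obtain ⟨u, hu, J', hJ', hs⟩ := shrink cs J (avg cs c N l) (avg_fin cs c N l) hv
      obtain ⟨x, J2, h1, h2, h3⟩ := ih J'.card (by rw [← hJ]; exact Finset.card_lt_card hJ') J'
        (u * w1) (u * w2) i1 i2 rfl
        (hs w1 i1 ha' (by rw [← ha]; exact (kill l).1)) (hs w2 i2 hb' (by rw [← hb]; exact (kill l).2))
        (by rw [gr_mul, gr_mul, gr_form, hab']) (by
          have : (u * w1 * cs.simple i1 * (u * w1)⁻¹) * (u * w2 * cs.simple i2 * (u * w2)⁻¹) = u * c * u⁻¹ := by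
            rw [hcdef]; group
          rw [this, conj_pow, hc]; simp)
      exact ⟨x * u, J2, h1, by rwa [mul_assoc], by rwa [mul_assoc]⟩

theorem Sp_pair {i j : B} (hij : i ≠ j) {v : B →₀ ℝ} (h : Sp {i, j} v) : v = v i • ee i + v j • ee j := by
  have := h.eq
  rwa [Finset.sum_pair hij] at this

/-- rank two roots are conjugate to simple ones -/
theorem classify (cs : CoxeterSystem M W) {i j : B} (hij : i ≠ j) (w : W) (a : B)
    (h : Sp {i, j} (gr cs w (ee a))) :
    ∃ u ∈ Subgroup.closure (cs.simple '' ((({i, j} : Finset B) : Set B))), ∃ l, (l = i ∨ l = j) ∧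
      (gr cs (u * w) (ee a) = ee l ∨ gr cs (u * w) (ee a) = - ee l) := by
  set r := w * cs.simple a * w⁻¹ with hr
  have hr2 : r ^ 2 = 1 := by rw [hr, pow_two]; simp [mul_assoc]
  obtain ⟨ρ, hρ⟩ : ∃ ρ, ρ = gr cs w (ee a) := ⟨_, rfl⟩
  have gr' : gr cs r = rfl2 (gB M) ρ := by rw [hr, gr_conj, hρ]
  have hρρ : gB M ρ ρ = 1 := by rw [hρ, gr_form, gB_self]
  have kill : ∀ l, avg cs r 2 l ρ = 0 := by
    intro l
    have := avg_inv cs r 2 hr2 l ρ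
    rw [gr', rfl2_self _ hρρ, map_neg] at this
    linarith
  have hex : ∃ l, ∃ v, Sp {i, j} v ∧ avg cs r 2 l v ≠ 0 := by
    by_contra hcon
    push Not at hcon
    have h1 : ∀ v, Sp {i, j} v → v = gB M ρ v • ρ := by
      intro v hv
      ext l
      have := hcon l v hv
      rw [avg_apply, Finset.sum_range_succ, Finset.sum_range_one, pow_zero, pow_one, gr', rfl2_apply, map_one] at this
      simp at this ⊢
      linarith
    have e1 := h1 (ee i) (Sp_ee (by simp))
    have e2 := h1 (ee j) (Sp_ee (by simp))
    generalize gB M ρ (ee i) = p at *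
    generalize gB M ρ (ee j) = q at *
    have f1 := congrArg (fun v => v i) e1
    have f2 := congrArg (fun v => v j) e1
    have f3 := congrArg (fun v => v i) e2
    have f4 := congrArg (fun v => v j) e2
    simp [ee, Finsupp.single_apply, hij, hij.symm] at f1 f2 f3 f4
    rcases f2 with f2 | f2
    · rw [f2] at f1; simp at f1
    · rw [f2] at f4; simp at f4
  obtain ⟨l, hv⟩ := hex
  obtain ⟨u, hu, J', hJ', hs⟩ := shrink cs {i, j} (avg cs r 2 l) (avg_fin cs r 2 l) hv
  have h2 := hs w a h (by rw [← hρ]; exact kill l)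
  have hcard := Finset.card_lt_card hJ'
  rw [Finset.card_pair hij] at hcard
  have hnz := gr_ne cs (u * w) a
  have hnorm : gB M (gr cs (u * w) (ee a)) (gr cs (u * w) (ee a)) = 1 := by rw [gr_form, gB_self]
  refine ⟨u, hu, ?_⟩
  rcases Nat.lt_or_ge J'.card 1 with h0 | h0
  · have : J' = ∅ := by rw [← Finset.card_eq_zero]; omega
    rw [this] at h2
    exact absurd (by rw [h2.eq]; simp) hnz
  · obtain ⟨l, hl⟩ := Finset.card_eq_one.mp (show J'.card = 1 by omega)
    have hl' : l ∈ ({i, j} : Finset B) := hJ'.1 (by rw [hl]; simp)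
    rw [hl] at h2
    have h3 := h2.eq
    rw [Finset.sum_singleton] at h3
    refine ⟨l, by simpa using hl', ?_⟩
    generalize gr cs (u * w) (ee a) = v at *
    generalize v l = z at *
    subst h3
    simp only [map_smul, LinearMap.smul_apply, gB_self, smul_eq_mul] at hnorm
    rcases mul_eq_zero.mp (show (z - 1) * (z + 1) = 0 by linarith) with h | h
    · left; rw [sub_eq_zero.mp h, one_smul]
    · right; rw [eq_neg_of_add_eq_zero_left h]; module
end reduce

section ranktwo

def vz (θ : ℝ) (i j : B) (k : ℤ) : B →₀ ℝ :=
  (Real.sin ((k + 1) * θ) / Real.sin θ) • ee i + (Real.sin (k * θ) / Real.sin θ) • ee j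

theorem gB_vz (M : CoxeterMatrix B) {θ : ℝ} (hθ : Real.sin θ ≠ 0) {i j : B}
    (hm : gB M (ee i) (ee j) = -Real.cos θ) (k : ℤ) :
    gB M (ee i) (vz θ i j k) = Real.cos (k * θ) := by
  simp only [vz, map_add, map_smul, gB_self, hm, smul_eq_mul, add_mul, one_mul, Real.sin_add]
  field_simp; ring

theorem gB_vz' (M : CoxeterMatrix B) {θ : ℝ} (hθ : Real.sin θ ≠ 0) {i j : B}
    (hm : gB M (ee i) (ee j) = -Real.cos θ) (k : ℤ) :
    gB M (ee j) (vz θ i j k) = - Real.cos ((k + 1) * θ) := by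
  have hm' : gB M (ee j) (ee i) = -Real.cos θ := by rw [gB_symm, hm]
  have : Real.sin (k * θ) = Real.sin ((k + 1) * θ - θ) := by ring_nf
  simp only [vz, map_add, map_smul, gB_self, hm', smul_eq_mul, this, Real.sin_sub]
  field_simp; ring

theorem s_vz (cs : CoxeterSystem M W) {θ : ℝ} (hθ : Real.sin θ ≠ 0) {i j : B}
    (hm : gB M (ee i) (ee j) = -Real.cos θ) (k : ℤ) :
    gr cs (cs.simple i) (vz θ i j k) = - vz θ i j (-k) := by
  rw [gr_simple_apply, gB_vz M hθ hm, vz, vz]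
  have e1 : Real.sin (((-k : ℤ) : ℝ) * θ) = - Real.sin (k * θ) := by
    push_cast; rw [neg_mul, Real.sin_neg]
  have e2 : Real.sin ((((-k : ℤ) : ℝ) + 1) * θ) = 2 * Real.cos (k * θ) * Real.sin θ - Real.sin ((k + 1) * θ) := by
    push_cast
    rw [show (-(k : ℝ) + 1) * θ = θ - k * θ by ring, add_mul, one_mul, Real.sin_sub, Real.sin_add]; ring
  rw [e1, e2, sub_div, mul_div_assoc, div_self hθ]
  module

theorem s_vz' (cs : CoxeterSystem M W) {θ : ℝ} (hθ : Real.sin θ ≠ 0) {i j : B}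
    (hm : gB M (ee i) (ee j) = -Real.cos θ) (k : ℤ) :
    gr cs (cs.simple j) (vz θ i j k) = - vz θ i j (-k - 2) := by
  rw [gr_simple_apply, gB_vz' M hθ hm, vz, vz]
  have e1 : Real.sin ((((-k - 2 : ℤ) : ℝ) + 1) * θ) = - Real.sin ((k + 1) * θ) := by
    push_cast; rw [← Real.sin_neg]; ring_nf
  have e2 : Real.sin (((-k - 2 : ℤ) : ℝ) * θ) = (2 * -Real.cos ((k + 1) * θ)) * Real.sin θ - Real.sin (k * θ) := by
    push_cast
    rw [show (-(k : ℝ) - 2) * θ = - ((k + 1) * θ + θ) by ring, show (k : ℝ) * θ = (k + 1) * θ - θ by ring,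
      Real.sin_neg, Real.sin_add, Real.sin_sub]; ring
  rw [e1, e2, sub_div, mul_div_assoc, div_self hθ]
  module

theorem vz_orbit (cs : CoxeterSystem M W) {θ : ℝ} (hθ : Real.sin θ ≠ 0) {i j : B}
    (hm : gB M (ee i) (ee j) = -Real.cos θ) {u : W}
    (hu : u ∈ Subgroup.closure (cs.simple '' ((({i, j} : Finset B) : Set B)))) :
    ∀ v, (∃ k : ℤ, v = vz θ i j k ∨ v = - vz θ i j k) →
      ∃ k : ℤ, gr cs u v = vz θ i j k ∨ gr cs u v = - vz θ i j k := by
  have hs : ∀ x ∈ cs.simple '' ((({i, j} : Finset B) : Set B)), ∀ v, (∃ k : ℤ, v = vz θ i j k ∨ v = - vz θ i j k) →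
      ∃ k : ℤ, gr cs x v = vz θ i j k ∨ gr cs x v = - vz θ i j k := by
    rintro _ ⟨l, hl, rfl⟩ v ⟨k, hk⟩
    have hl' : l = i ∨ l = j := by simpa using hl
    rcases hl' with rfl | rfl
    · refine ⟨-k, ?_⟩
      rcases hk with rfl | rfl
      · right; exact s_vz cs hθ hm k
      · left; rw [map_neg, s_vz cs hθ hm k, neg_neg]
    · refine ⟨-k - 2, ?_⟩
      rcases hk with rfl | rfl
      · right; exact s_vz' cs hθ hm k
      · left; rw [map_neg, s_vz' cs hθ hm k, neg_neg]
  induction hu using Subgroup.closure_induction_left with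
  | one => intro v hv; simpa using hv
  | mul_left x hx y hy ih =>
    intro v hv
    rw [gr_mul]
    exact hs x hx _ (ih v hv)
  | inv_mul_cancel x hx y hy ih =>
    intro v hv
    have hx2 := hx
    obtain ⟨l, hl, rfl⟩ := hx
    rw [cs.inv_simple, gr_mul]
    exact hs _ hx2 _ (ih v hv)

theorem vz_zero {θ : ℝ} (hθ : Real.sin θ ≠ 0) (i j : B) : vz θ i j 0 = ee i := by
  simp [vz, div_self hθ]

theorem vz_neg_one {θ : ℝ} (hθ : Real.sin θ ≠ 0) (i j : B) : vz θ i j (-1) = - ee j := by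
  simp [vz, neg_div, div_self hθ]

theorem vz_period {m : ℕ} (hm : m ≠ 0) (i j : B) (k z : ℤ) :
    vz (Real.pi / m) i j (k + z * m) = vz (Real.pi / m) i j k ∨
    vz (Real.pi / m) i j (k + z * m) = - vz (Real.pi / m) i j k := by
  have hm' : (m : ℝ) ≠ 0 := by exact_mod_cast hm
  have e1 : (((k + z * m : ℤ) : ℝ) + 1) * (Real.pi / m) = (k + 1) * (Real.pi / m) + z * Real.pi := by
    push_cast; field_simp; ring
  have e2 : ((k + z * m : ℤ) : ℝ) * (Real.pi / m) = k * (Real.pi / m) + z * Real.pi := by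
    push_cast; field_simp
  simp only [vz, e1, e2, Real.sin_add_int_mul_pi]
  rcases Int.even_or_odd z with h | h
  · left; rw [h.neg_one_zpow]; simp
  · right; rw [h.neg_one_zpow]; module

/-- an ordering of `{i,j}` realizing the alternating root -/
theorem vz_alt (cs : CoxeterSystem M W) {i j : B} (hij : i ≠ j) (hm : M i j ≠ 0) (e : ℕ) :
    ∃ p q, p ≠ q ∧ M p q = M i j ∧ fst q p e = i ∧
      gr cs (alt cs p q e) (ee p) = - vz (Real.pi / (M i j : ℕ)) i j (-((e : ℤ) + 1)) := by
  have hs := (sin_pi_div_pos (M_two_le M hij hm)).ne'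
  have hv : Useq (Real.cos (Real.pi / (M i j : ℕ))) (e + 1) • ee j +
      Useq (Real.cos (Real.pi / (M i j : ℕ))) e • ee i =
      - vz (Real.pi / (M i j : ℕ)) i j (-((e : ℤ) + 1)) := by
    rw [(Useq_sin hs e).1, (Useq_sin hs (e+1)).1, vz]
    have e1 : Real.sin ((((-((e : ℤ) + 1) : ℤ) : ℝ) + 1) * (Real.pi / (M i j : ℕ))) =
      - Real.sin (e * (Real.pi / (M i j : ℕ))) := by
      rw [← Real.sin_neg]; push_cast; ring_nf
    have e2 : Real.sin (((-((e : ℤ) + 1) : ℤ) : ℝ) * (Real.pi / (M i j : ℕ))) =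
      - Real.sin ((e + 1 : ℕ) * (Real.pi / (M i j : ℕ))) := by
      rw [← Real.sin_neg]; push_cast; ring_nf
    rw [e1, e2]
    module
  rcases fst_cases i j e with ⟨h1, h2⟩ | ⟨h1, h2⟩
  · refine ⟨j, i, hij.symm, M.symmetric _ _, h1, ?_⟩
    rw [gr_alt, h1, h2, M.symmetric j i]; exact hv
  · refine ⟨i, j, hij, rfl, h2, ?_⟩
    rw [gr_alt, h1, h2]; exact hv

theorem geometric (cs : CoxeterSystem M W) {w1 w2 : W} {i1 i2 : B} {N : ℕ} (hN : 2 ≤ N)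
    (hab : gB M (gr cs w1 (ee i1)) (gr cs w2 (ee i2)) = -Real.cos (Real.pi / N))
    (hc : ((w1 * cs.simple i1 * w1⁻¹) * (w2 * cs.simple i2 * w2⁻¹)) ^ N = 1) :
    ∃ (y : W) (p q : B) (e : ℕ), p ≠ q ∧ (e + 1) * N = M p q ∧
      (gr cs (y * w1) (ee i1) = ee (fst q p e) ∨ gr cs (y * w1) (ee i1) = - ee (fst q p e)) ∧
      (gr cs (y * w2) (ee i2) = gr cs (alt cs p q e) (ee p) ∨
       gr cs (y * w2) (ee i2) = - gr cs (alt cs p q e) (ee p)) := by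
  have hsN := sin_pi_div_pos hN
  have hN0 : (N : ℝ) ≠ 0 := by positivity
  have hC : 1 - Real.cos (Real.pi / N) ^ 2 ≠ 0 := by
    rw [← Real.sin_sq]; positivity
  have haa : ∀ x, gB M (gr cs (x * w1) (ee i1)) (gr cs (x * w1) (ee i1)) = 1 := fun x => by rw [gr_form, gB_self]
  have hbb : ∀ x, gB M (gr cs (x * w2) (ee i2)) (gr cs (x * w2) (ee i2)) = 1 := fun x => by rw [gr_form, gB_self]
  have hab' : ∀ x, gB M (gr cs (x * w1) (ee i1)) (gr cs (x * w2) (ee i2)) = -Real.cos (Real.pi / N) :=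
    fun x => by rw [gr_mul, gr_mul, gr_form, hab]
  obtain ⟨x, J, hJ, ha, hb⟩ := reduce2 cs hC (by omega) _
    ((gr cs w1 (ee i1)).support ∪ (gr cs w2 (ee i2)).support) w1 w2 i1 i2 rfl
    (fun b hb => by simp at hb; tauto) (fun b hb => by simp at hb; tauto) hab hc
  have key : ∀ (i j : B) (x : W), i ≠ j → Sp {i, j} (gr cs (x * w1) (ee i1)) → Sp {i, j} (gr cs (x * w2) (ee i2)) →
      (gr cs (x * w1) (ee i1) = ee i ∨ gr cs (x * w1) (ee i1) = - ee i) → 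
    ∃ (y : W) (p q : B) (e : ℕ), p ≠ q ∧ (e + 1) * N = M p q ∧
      (gr cs (y * w1) (ee i1) = ee (fst q p e) ∨ gr cs (y * w1) (ee i1) = - ee (fst q p e)) ∧
      (gr cs (y * w2) (ee i2) = gr cs (alt cs p q e) (ee p) ∨
       gr cs (y * w2) (ee i2) = - gr cs (alt cs p q e) (ee p)) := by
    intro i j x hij ha hb hai
    have hM : M i j ≠ 0 := by
      intro h0
      have g1 := gB_ee M i j
      have g2 := gB_ee M j i
      rw [M.symmetric] at g2
      rw [h0] at g1 g2
      have h1 := haa x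
      have h2 := hbb x
      have h3 := hab' x
      rw [Sp_pair hij ha] at h1 h3
      rw [Sp_pair hij hb] at h2 h3
      simp only [map_add, map_smul, LinearMap.add_apply, LinearMap.smul_apply, gB_self, g1, g2, smul_eq_mul,
        Nat.cast_zero, div_zero, Real.cos_zero] at h1 h2 h3
      generalize gr cs (x * w1) (ee i1) i = a1 at *
      generalize gr cs (x * w1) (ee i1) j = a2 at *
      generalize gr cs (x * w2) (ee i2) i = b1 at *
      generalize gr cs (x * w2) (ee i2) j = b2 at *
      apply hC
      have k1 : (a1 - a2) ^ 2 = 1 := by linear_combination h1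
      have k2 : (b1 - b2) ^ 2 = 1 := by linear_combination h2
      have k3 : Real.cos (Real.pi / N) = - ((a1 - a2) * (b1 - b2)) := by linear_combination h3
      rw [k3]; linear_combination -(b1 - b2) ^ 2 * k1 - k2
    obtain ⟨m, hm⟩ : ∃ m, m = M i j := ⟨_, rfl⟩
    have hm2 : 2 ≤ m := by rw [hm]; exact M_two_le M hij hM
    have hs := (sin_pi_div_pos hm2).ne'
    have hm0 : (m : ℝ) ≠ 0 := by positivity
    have hg : gB M (ee i) (ee j) = -Real.cos (Real.pi / m) := by rw [hm, gB_ee]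
    obtain ⟨u, hu, l, hl, hl2⟩ := classify cs hij (x * w2) i2 hb
    have hbv : ∃ k : ℤ, gr cs (x * w2) (ee i2) = vz (Real.pi / m) i j k ∨
        gr cs (x * w2) (ee i2) = - vz (Real.pi / m) i j k := by
      rw [← gr_inv_cancel cs u (gr cs (x * w2) (ee i2)), ← gr_mul cs u]
      refine vz_orbit cs hs hg (inv_mem hu) _ ?_
      rcases hl with rfl | rfl
      · exact ⟨0, by rw [vz_zero hs]; exact hl2⟩
      · exact ⟨-1, by rw [vz_neg_one hs, neg_neg]; exact hl2.symm⟩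
    obtain ⟨k, hk⟩ := hbv
    have hcos : Real.cos (k * (Real.pi / m)) ^ 2 = Real.cos (Real.pi / N) ^ 2 := by
      have h3 := hab' x
      have h4 := gB_vz M hs hg k
      rw [← h4]
      rcases hai with hai | hai <;> rcases hk with hk | hk <;> rw [hai, hk] at h3 <;>
        (try simp only [map_neg, LinearMap.neg_apply] at h3) <;>
        (have h5 := congrArg (fun t : ℝ => t ^ 2) h3; simp only [neg_sq] at h5; exact h5)
    have hsin : Real.sin (k * (Real.pi / m) - Real.pi / N) * Real.sin (k * (Real.pi / m) + Real.pi / N) = 0 := by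
      rw [Real.sin_sub, Real.sin_add]
      have e1 := Real.sin_sq_add_cos_sq (k * (Real.pi / m))
      have e2 := Real.sin_sq_add_cos_sq (Real.pi / N)
      generalize Real.sin (k * (Real.pi / m)) = S1 at *
      generalize Real.cos (k * (Real.pi / m)) = C1 at *
      generalize Real.sin (Real.pi / N) = S2 at *
      generalize Real.cos (Real.pi / N) = C2 at *
      linear_combination C2 ^ 2 * e1 - C1 ^ 2 * e2 - hcos
    have hz : ∃ z : ℤ, k * N = m + z * (m * N) ∨ k * N = -m + z * (m * N) := by
      rcases mul_eq_zero.mp hsin with h | h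
      · obtain ⟨z, hz⟩ := Real.sin_eq_zero_iff.mp h
        refine ⟨z, Or.inl ?_⟩
        have : (k : ℝ) * N = m + z * (m * N) := by
          have hp := Real.pi_ne_zero
          have hP1 : Real.pi / m * m = Real.pi := div_mul_cancel₀ _ hm0
          have hP2 : Real.pi / N * N = Real.pi := div_mul_cancel₀ _ hN0
          refine mul_left_cancel₀ hp ?_
          linear_combination (-(m * N : ℝ)) * hz - k * N * hP1 + m * hP2
        exact_mod_cast this
      · obtain ⟨z, hz⟩ := Real.sin_eq_zero_iff.mp h
        refine ⟨z, Or.inr ?_⟩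
        have : (k : ℝ) * N = -m + z * (m * N) := by
          have hp := Real.pi_ne_zero
          have hP1 : Real.pi / m * m = Real.pi := div_mul_cancel₀ _ hm0
          have hP2 : Real.pi / N * N = Real.pi := div_mul_cancel₀ _ hN0
          refine mul_left_cancel₀ hp ?_
          linear_combination (-(m * N : ℝ)) * hz - k * N * hP1 - m * hP2
        exact_mod_cast this
    obtain ⟨z, hz⟩ := hz
    have hdvd : (N : ℤ) ∣ m := by
      rcases hz with hz | hz
      · exact ⟨k - z * m, by linear_combination -hz⟩
      · exact ⟨-k + z * m, by linear_combination hz⟩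
    obtain ⟨d, hd⟩ := Int.natCast_dvd_natCast.mp hdvd
    obtain ⟨e, rfl⟩ : ∃ e, d = e + 1 := Nat.exists_eq_succ_of_ne_zero (by rintro rfl; omega)
    have hNz : (N : ℤ) ≠ 0 := by omega
    have hk2 : k = (e + 1) + z * m ∨ k = -((e : ℤ) + 1) + z * m := by
      have hd' : (m : ℤ) = N * (e + 1) := by exact_mod_cast hd
      rcases hz with hz | hz
      · left
        apply mul_right_cancel₀ hNz; rw [hz]; linear_combination hd'
      · right
        apply mul_right_cancel₀ hNz; rw [hz]; linear_combination -hd'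
    obtain ⟨p, q, hpq, hMpq, hf, hv⟩ := vz_alt cs hij hM e
    rw [← hm] at hv
    rcases hk2 with hk2 | hk2
    · refine ⟨cs.simple i * x, p, q, e, hpq, by rw [hMpq, ← hm, hd, mul_comm], ?_, ?_⟩
      · rw [hf, mul_assoc, gr_mul]
        rcases hai with hai | hai
        · right; rw [hai, gr_simple_apply, gB_self]; module
        · left; rw [hai, map_neg, gr_simple_apply, gB_self]; module
      · rw [mul_assoc, gr_mul, hv]
        have h1 : gr cs (cs.simple i) (vz (Real.pi / m) i j (e + 1)) = _ := s_vz cs hs hg (e + 1)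
        have h2 := vz_period (by omega : m ≠ 0) i j (e + 1) z
        rw [← hk2] at h2
        rcases hk with hk | hk <;> rcases h2 with h2 | h2 <;> rw [hk, h2] <;>
          simp only [map_neg, h1, neg_neg, true_or, or_true]
    · refine ⟨x, p, q, e, hpq, by rw [hMpq, ← hm, hd, mul_comm], ?_, ?_⟩
      · rw [hf]; exact hai
      · rw [hv]
        have h2 := vz_period (by omega : m ≠ 0) i j (-((e : ℤ) + 1)) z
        rw [← hk2] at h2
        rcases hk with hk | hk <;> rcases h2 with h2 | h2 <;> rw [hk, h2] <;>
          simp only [neg_neg, true_or, or_true]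
  have hJ2 : J.card = 2 := by
    by_contra hcard
    rcases Nat.lt_or_ge J.card 1 with h0 | h0
    · have : J = ∅ := by rw [← Finset.card_eq_zero]; omega
      rw [this] at ha
      exact absurd (by rw [ha.eq]; simp) (gr_ne cs (x * w1) i1)
    · obtain ⟨l, hl⟩ := Finset.card_eq_one.mp (show J.card = 1 by omega)
      rw [hl] at ha hb
      have h1 := haa x
      have h2 := hbb x
      have h3 := hab' x
      have ea := ha.eq
      have eb := hb.eq
      rw [Finset.sum_singleton] at ea eb
      rw [ea] at h1 h3
      rw [eb] at h2 h3
      simp only [map_smul, LinearMap.smul_apply, gB_self, smul_eq_mul] at h1 h2 h3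
      generalize gr cs (x * w1) (ee i1) l = a1 at *
      generalize gr cs (x * w2) (ee i2) l = b1 at *
      apply hC
      have k3 : Real.cos (Real.pi / N) = - (a1 * b1) := by linear_combination h3
      rw [k3]; linear_combination - b1 ^ 2 * h1 - h2
  obtain ⟨i, j, hij, rfl⟩ := Finset.card_eq_two.mp hJ2
  obtain ⟨u, hu, l, hl, hl2⟩ := classify cs hij (x * w1) i1 ha
  have ha' : Sp {i, j} (gr cs (u * x * w1) (ee i1)) := by
    rw [mul_assoc, gr_mul]; exact Sp_closure cs _ hu ha
  have hb' : Sp {i, j} (gr cs (u * x * w2) (ee i2)) := by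
    rw [mul_assoc, gr_mul]; exact Sp_closure cs _ hu hb
  rw [← mul_assoc] at hl2
  rcases hl with rfl | rfl
  · exact key l j (u * x) hij ha' hb' hl2
  · rw [Finset.pair_comm] at ha' hb'
    exact key l i (u * x) hij.symm ha' hb' hl2
end ranktwo

section transfer

/-- contragredient action as a homomorphism -/
def dR (R : PreRealization cs k V) : W →* Module.End k (Module.Dual k V) where
  toFun w :=
    { toFun := fun f => dAct R w f
      map_add' := fun f g => by ext v; simp [dAct]
      map_smul' := fun c f => by ext v; simp [dAct] }
  map_one' := by ext f v; simp [dAct]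
  map_mul' u v := by ext f x; simp [dAct]

theorem dR_apply (R : PreRealization cs k V) (w : W) (f : Module.Dual k V) (v : V) :
    dR R w f v = f (R.rep w⁻¹ v) := rfl

theorem dR_pair (R : PreRealization cs k V) (w : W) (f : Module.Dual k V) (v : V) :
    dR R w f (R.rep w v) = f v := by
  rw [dR_apply, ← Module.End.mul_apply, ← map_mul, inv_mul_cancel, map_one, Module.End.one_apply]

theorem dR_simple (R : PreRealization cs k V) (i j : B) :
    dR R (cs.simple j) (R.root i) = R.root i - cartanS R j i • R.root j := by
  ext v
  rw [dR_apply, cs.inv_simple, R.rep_simple]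
  simp [cartanS, mul_comm]

theorem rep_simple' (R : PreRealization cs k V) (i j : B) :
    R.rep (cs.simple j) (R.coroot i) = R.coroot i - cartanS R i j • R.coroot j := by
  rw [R.rep_simple, cartanS]

theorem pos_prop {x y : B →₀ ℝ} {t : B} (hx : Pos x) (hy : Pos y) (h : x + y = ee t) :
    x = x t • ee t := by
  ext b
  by_cases hb : b = t
  · subst hb; simp [ee]
  · have h1 := hx b
    have h2 := hy b
    have h3 := congrArg (fun v => v b) h
    simp [ee, Finsupp.single_apply, Ne.symm hb] at h3 ⊢
    have h4 : t ≠ b := Ne.symm hb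
    simp [h4] at *
    linarith

theorem tr_root (R : PreRealization cs k V)
    (hq : ∀ i j, i ≠ j → M i j ≠ 0 → (qe (cartanS R i j) (cartanS R j i) (M i j)).2 = 0) (n : ℕ) :
    ∀ (w : W) (i t : B), cs.length w = n → gr cs w (ee i) = ee t →
      ∃ κ : k, dR R w (R.root i) = κ • R.root t := by
  induction n using Nat.strong_induction_on with
  | _ n ih =>
    intro w i t hn h
    by_cases hw : w = 1
    · subst hw
      rw [map_one, Module.End.one_apply] at h
      have : i = t := Finsupp.single_left_injective (one_ne_zero) h
      subst this
      exact ⟨1, by simp⟩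
    · have hi := (gr_pos_iff cs w i).1 (by rw [h]; exact pos_ee t)
      obtain ⟨v, j, r, hij, e1, e2, hr, hM, e3, e4⟩ := dec cs w i hi hw
      have p1 := (gr_pos_iff cs v i).2 e3
      have p2 := (gr_pos_iff cs v j).2 e4
      have hqpos := U_pos M hij (n := r) (by omega) hr
      have hpn := U_nonneg M hij (n := r + 1) hM
      have hsum := h
      rw [e1, gr_mul, gr_alt, map_add, map_smul, map_smul] at hsum
      have hcl : r + 1 = M i j ∧ M i j ≠ 0 := by
        by_contra hcon
        have hppos := U_pos M hij (n := r + 1) (by omega) (by omega)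
        generalize Useq (Real.cos (Real.pi / (M i j : ℕ))) (r + 1) = p at *
        generalize Useq (Real.cos (Real.pi / (M i j : ℕ))) r = q at *
        have fin : ∀ a b : B, a ≠ b → Pos (gr cs v (ee a)) → Pos (gr cs v (ee b)) →
            p • gr cs v (ee a) + q • gr cs v (ee b) = ee t → False := by
          intro a b hab pa pb hs
          have f1 := pos_prop (pa.smul hpn) (pb.smul hqpos.le) hs
          have f2 := pos_prop (pb.smul hqpos.le) (pa.smul hpn) (by rw [add_comm]; exact hs)
          set A := (p • gr cs v (ee a)) t with hA
          set D := (q • gr cs v (ee b)) t with hD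
          have f3 : (D * p) • gr cs v (ee a) = (A * q) • gr cs v (ee b) := by
            rw [mul_smul, mul_smul, f1, f2, smul_smul, smul_smul, mul_comm]
          rw [← map_smul, ← map_smul] at f3
          have f4 := gr_inj' cs v f3
          have f5 := congrArg (fun v => v a) f4
          simp [ee, Finsupp.single_apply, hab, hab.symm] at f5
          rcases f5 with f5 | f5
          · rw [f5, zero_smul] at f2
            exact gr_ne cs v b ((smul_eq_zero.mp f2).resolve_left hqpos.ne')
          · linarith
        rcases fst_cases i j r with ⟨h1, h2⟩ | ⟨h1, h2⟩
        · rw [h1, h2] at hsum; exact fin i j hij p1 p2 hsum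
        · rw [h1, h2] at hsum; exact fin j i hij.symm p2 p1 hsum
      have hU0 : Useq (Real.cos (Real.pi / (M i j : ℕ))) (r + 1) = 0 := by
        rw [hcl.1]; exact U_M M hij hcl.2
      rw [hU0, zero_smul, zero_add] at hsum
      have hv : gr cs v (ee (fst j i r)) = ee t := by
        have h1 : gB M (ee t) (ee t) = 1 := gB_self M t
        rw [← hsum] at h1
        simp only [map_smul, LinearMap.smul_apply, gr_form, gB_self, smul_eq_mul] at h1
        have : Useq (Real.cos (Real.pi / (M i j : ℕ))) r = 1 := by nlinarith
        rw [← hsum, this, one_smul]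
      obtain ⟨κ, hκ⟩ := ih (cs.length v) (by omega) v _ t rfl hv
      have hd := dih_formula cs (dR R) R.root (fun a b => cartanS R a b)
        (fun a => R.root_coroot_eq_two a) (fun a b => dR_simple R a b) r i j
      simp only [hcl.1, hq i j hij hcl.2, mul_zero, zero_smul, zero_sub] at hd
      refine ⟨-((-1) ^ r * (qe (cartanS R i j) (cartanS R j i) r).2 * κ), ?_⟩
      rw [e1, map_mul, Module.End.mul_apply, hd, map_neg, map_smul, hκ]
      module

theorem tr_unit (R : PreRealization cs k V)
    (hq : ∀ i j, i ≠ j → M i j ≠ 0 → (qe (cartanS R i j) (cartanS R j i) (M i j)).2 = 0)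
    (w : W) (i t : B) (h : gr cs w (ee i) = ee t) :
      ∃ κ : kˣ, dR R w (R.root i) = (κ : k) • R.root t ∧
        R.rep w (R.coroot i) = ((κ⁻¹ : kˣ) : k) • R.coroot t := by
  obtain ⟨κ, hκ⟩ := tr_root R hq _ w i t rfl h
  obtain ⟨κ', hκ'⟩ := tr_root R hq _ w⁻¹ t i rfl (by rw [← h, gr_inv_cancel])
  have h1 : κ * κ' = 1 := by
    have h2 := congrArg (dR R w⁻¹) hκ
    rw [← Module.End.mul_apply, ← map_mul, inv_mul_cancel, map_one, Module.End.one_apply, map_smul,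
      hκ', smul_smul] at h2
    obtain ⟨v, hv⟩ := R.root_surjective i 1
    have h3 := congrArg (fun f => f v) h2
    simp [hv] at h3
    exact h3.symm
  have hc := conj_of_eq cs (w := w) (w' := 1) (i := i) (j := t) (Or.inl (by simpa using h))
  rw [one_mul, inv_one, mul_one] at hc
  obtain ⟨v, hv⟩ := R.root_surjective t 1
  have h4 : κ • R.rep w (R.coroot i) = R.coroot t := by
    have h5 := R.rep_simple t v
    rw [← hc, map_mul, map_mul, Module.End.mul_apply, Module.End.mul_apply, R.rep_simple, map_sub,
      map_smul, ← dR_apply, hκ, ← Module.End.mul_apply, ← map_mul, mul_inv_cancel, map_one,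
      Module.End.one_apply] at h5
    simp only [LinearMap.smul_apply, hv, smul_eq_mul, mul_one, one_smul] at h5
    exact sub_right_injective h5
  refine ⟨⟨κ, κ', h1, by rw [mul_comm]; exact h1⟩, hκ, ?_⟩
  rw [← h4, smul_smul]
  change _ = (κ' * κ) • _
  rw [mul_comm, h1, one_smul]

theorem tr_sign (R : PreRealization cs k V)
    (hq : ∀ i j, i ≠ j → M i j ≠ 0 → (qe (cartanS R i j) (cartanS R j i) (M i j)).2 = 0)
    (w w' : W) (i t : B) (h : gr cs w (ee i) = gr cs w' (ee t) ∨ gr cs w (ee i) = - gr cs w' (ee t)) :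
      ∃ κ : kˣ, dR R w (R.root i) = (κ : k) • dR R w' (R.root t) ∧
        R.rep w (R.coroot i) = ((κ⁻¹ : kˣ) : k) • R.rep w' (R.coroot t) := by
  have e1 : ∀ x : W, dR R w' (dR R (w'⁻¹ * x) (R.root i)) = dR R x (R.root i) := fun x => by
    rw [← Module.End.mul_apply, ← map_mul, mul_inv_cancel_left]
  have e2 : ∀ x : W, R.rep w' (R.rep (w'⁻¹ * x) (R.coroot i)) = R.rep x (R.coroot i) := fun x => by
    rw [← Module.End.mul_apply, ← map_mul, mul_inv_cancel_left]
  rcases h with h | h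
  · obtain ⟨κ, h1, h2⟩ := tr_unit R hq (w'⁻¹ * w) i t (by rw [gr_mul, h, gr_inv_cancel])
    refine ⟨κ, ?_, ?_⟩
    · rw [← e1, h1, map_smul]
    · rw [← e2, h2, map_smul]
  · obtain ⟨κ, h1, h2⟩ := tr_unit R hq (w'⁻¹ * (w * cs.simple i)) i t
      (by rw [gr_mul, gr_ee_neg, h, neg_neg, gr_inv_cancel])
    refine ⟨-κ, ?_, ?_⟩
    · have h3 := e1 (w * cs.simple i)
      rw [h1, map_mul, Module.End.mul_apply, dR_simple, show cartanS R i i = 2 from R.root_coroot_eq_two i, map_smul] at h3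
      have h4 : dR R w (R.root i) = - dR R w (R.root i - (2 : k) • R.root i) := by
        rw [← map_neg]; congr 1; module
      rw [h4, ← h3, Units.val_neg]; refine LinearMap.ext fun v => ?_
      simp only [LinearMap.neg_apply, LinearMap.smul_apply, smul_eq_mul, neg_mul]
    · have h3 := e2 (w * cs.simple i)
      rw [h2, map_mul, Module.End.mul_apply, rep_simple', show cartanS R i i = 2 from R.root_coroot_eq_two i, map_smul] at h3
      have h4 : R.rep w (R.coroot i) = - R.rep w (R.coroot i - (2 : k) • R.coroot i) := by
        rw [← map_neg]; congr 1; module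
      rw [h4, ← h3]; simp

theorem qe_odd (a b : k) (n : ℕ) : (qe a b (2 * n + 1)).1 = (qe a b (2 * n + 1)).2 ∧
    b * (qe a b (2 * n)).1 = a * (qe a b (2 * n)).2 := by
  induction n with
  | zero => simp [qe]
  | succ n ih =>
    have e1 : qe a b (2 * (n + 1)) = (a * (qe a b (2 * n + 1)).2 - (qe a b (2 * n)).1, b * (qe a b (2 * n + 1)).1 - (qe a b (2 * n)).2) := rfl
    have e2 : qe a b (2 * (n + 1) + 1) = (a * (qe a b (2 * (n + 1))).2 - (qe a b (2 * n + 1)).1, b * (qe a b (2 * (n + 1))).1 - (qe a b (2 * n + 1)).2) := rfl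
    have hE : b * (qe a b (2 * (n + 1))).1 = a * (qe a b (2 * (n + 1))).2 := by
      rw [e1]; simp only
      linear_combination -ih.2 - a * b * ih.1
    refine ⟨?_, hE⟩
    rw [e2]; simp only
    linear_combination - ih.1 - hE

theorem rank2_pair (R : PreRealization cs k V) (p q : B) (e : ℕ) :
    dR R (alt cs p q e) (R.root p) (R.coroot (fst q p e)) =
      (-1) ^ e * ((qe (cartanS R (fst q p e) (fst p q e)) (cartanS R (fst p q e) (fst q p e)) (e + 2)).1 -
        (qe (cartanS R (fst q p e) (fst p q e)) (cartanS R (fst p q e) (fst q p e)) e).1) ∧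
    R.root (fst q p e) (R.rep (alt cs p q e) (R.coroot p)) =
      (-1) ^ e * ((qe (cartanS R (fst q p e) (fst p q e)) (cartanS R (fst p q e) (fst q p e)) (e + 2)).2 -
        (qe (cartanS R (fst q p e) (fst p q e)) (cartanS R (fst p q e) (fst q p e)) e).2) := by
  have d1 := dih_formula cs (dR R) R.root (fun a b => cartanS R a b)
        (fun a => R.root_coroot_eq_two a) (fun a b => dR_simple R a b) e p q
  have d2 := dih_formula cs R.rep R.coroot (fun a b => cartanS R b a)
        (fun a => R.root_coroot_eq_two a) (fun a b => rep_simple' R a b) e p q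
  simp only [(qe_swap (cartanS R p q) (cartanS R q p) e).1, (qe_swap (cartanS R p q) (cartanS R q p) e).2] at d2
  rw [d1, d2]
  simp only [LinearMap.sub_apply, LinearMap.smul_apply, map_sub, map_smul, smul_eq_mul, R.root_coroot_eq_two]
  have hpar : (Even e ∧ fst p q e = p ∧ fst q p e = q) ∨ (Odd e ∧ fst p q e = q ∧ fst q p e = p) := by
    cases e with
    | zero => simp [fst]
    | succ n =>
      by_cases hn : Even n
      · right; simp [fst, hn, hn.add_one]
      · left; simp [fst, hn]; exact (Nat.not_even_iff_odd.mp hn).add_one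
  rcases hpar with ⟨he, h1, h2⟩ | ⟨he, h1, h2⟩
  · rw [h1, h2]
    obtain ⟨m, rfl⟩ := he.two_dvd
    have ho := (qe_odd (cartanS R p q) (cartanS R q p) m).1
    rw [(qe_swap (cartanS R p q) (cartanS R q p) (2 * m + 1)).2, (qe_swap (cartanS R p q) (cartanS R q p) (2 * m)).1,
      qe_add_two (cartanS R p q)]
    change _ * R.root p (R.coroot q) - _ = _ ∧ _ * R.root q (R.coroot p) - _ = _
    change _ * cartanS R q p - _ = _ ∧ _ * cartanS R p q - _ = _
    simp only
    constructor
    · linear_combination - (-1) ^ (2 * m) * cartanS R q p * ho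
    · linear_combination (-1) ^ (2 * m) * cartanS R p q * ho
  · rw [h1, h2]
    obtain ⟨m, rfl⟩ := he
    have ho := (qe_odd (cartanS R p q) (cartanS R q p) m).1
    rw [qe_add_two (cartanS R p q) (cartanS R q p) (2 * m + 1)]
    change _ * cartanS R p q - _ = _ ∧ _ * cartanS R q p - _ = _
    simp only
    constructor
    · linear_combination 2 * (-1) ^ (2 * m + 1) * ho
    · linear_combination (-2) * (-1) ^ (2 * m + 1) * ho
end transfer

open MvPolynomial in
theorem qX_nat (n : ℕ) : qX (n : ℤ) = (qPair n).1 := by simp [qX]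
theorem qY_nat (n : ℕ) : qY (n : ℤ) = (qPair n).2 := by simp [qY]

theorem pev_twist {k : Type*} [CommRing k] (a b : k) (d : ℤ) (p : A2) :
    pev a b (twist d p) = pev (pev a b (twX d)) (pev a b (twY d)) p := by
  unfold pev twist
  have : (MvPolynomial.aeval ![a, b] : A2 →ₐ[ℤ] k).comp (MvPolynomial.aeval ![twX d, twY d] : A2 →ₐ[ℤ] A2)
      = MvPolynomial.aeval ![(MvPolynomial.aeval ![a, b] : A2 →ₐ[ℤ] k) (twX d), (MvPolynomial.aeval ![a, b] : A2 →ₐ[ℤ] k) (twY d)] := by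
    apply MvPolynomial.algHom_ext
    intro i
    fin_cases i <;> simp
  exact DFunLike.congr_fun this p

/-- generic target ring -/
abbrev KK (k : Type*) [CommRing k] := MvPolynomial (Fin 2) k

def gx (k : Type*) [CommRing k] : KK k := MvPolynomial.X 0
def gy (k : Type*) [CommRing k] : KK k := MvPolynomial.X 1

theorem pev_eval {k : Type*} [CommRing k] (a b : k) (f g : KK k) (p : A2) :
    MvPolynomial.aeval ![a, b] (pev f g p) =
      pev (MvPolynomial.aeval ![a, b] f) (MvPolynomial.aeval ![a, b] g) p := by
  unfold pev
  have : ((MvPolynomial.aeval ![a, b] : KK k →ₐ[k] k).restrictScalars ℤ).comp (MvPolynomial.aeval ![f, g] : A2 →ₐ[ℤ] KK k)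
      = MvPolynomial.aeval ![(MvPolynomial.aeval ![a, b] : KK k →ₐ[k] k) f, (MvPolynomial.aeval ![a, b] : KK k →ₐ[k] k) g] := by
    apply MvPolynomial.algHom_ext
    intro i
    fin_cases i <;> simp
  exact DFunLike.congr_fun this p

/-- scaling exponent -/
def sc {R : Type*} [CommRing R] (u : Rˣ) (n : ℕ) : Rˣ := if Even n then u else 1

theorem qe_scale {R : Type*} [CommRing R] (a b : R) (u : Rˣ) (n : ℕ) :
    (qe (↑u * a) (↑u⁻¹ * b) n = (↑(sc u n) * (qe a b n).1, ↑(sc u⁻¹ n) * (qe a b n).2)) ∧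
    (qe (↑u * a) (↑u⁻¹ * b) (n + 1) = (↑(sc u (n+1)) * (qe a b (n+1)).1, ↑(sc u⁻¹ (n+1)) * (qe a b (n+1)).2)) := by
  induction n with
  | zero => constructor <;> ext <;> simp [qe, sc]
  | succ n ih =>
    refine ⟨ih.2, ?_⟩
    obtain ⟨h1, h2⟩ := ih
    rw [qe_add_two, qe_add_two, h1, h2]
    rcases Nat.even_or_odd n with h | h
    · have h' : ¬ Even (n + 1) := by simpa [Nat.even_add_one] using h
      have h'' : Even (n + 1 + 1) := by simpa [Nat.even_add_one] using h
      ext <;> simp [sc, h, h', h''] <;> ring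
    · have hn : ¬ Even n := by simpa using h
      have h' : Even (n + 1) := by simpa [Nat.even_add_one] using h
      have h'' : ¬ Even (n + 1 + 1) := by simpa [Nat.even_add_one] using h
      have hu : (u : R) * ((u⁻¹ : Rˣ) : R) = 1 := u.mul_inv
      ext
      · simp only [sc, hn, h', h'', if_true, if_false, Units.val_one]
        linear_combination a * (qe a b (n + 1)).2 * hu
      · simp only [sc, hn, h', h'', if_true, if_false, Units.val_one]
        linear_combination b * (qe a b (n + 1)).1 * hu

theorem qe_monic (k : Type*) [CommRing k] [Nontrivial k] (n : ℕ) :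
    (qe (Polynomial.X : Polynomial k) Polynomial.X (n+1)).1 = (qe (Polynomial.X : Polynomial k) Polynomial.X (n+1)).2 ∧
    ((qe (Polynomial.X : Polynomial k) Polynomial.X (n+1)).1.Monic) ∧ (qe (Polynomial.X : Polynomial k) Polynomial.X (n+1)).1.natDegree = n ∧
    (qe (Polynomial.X : Polynomial k) Polynomial.X n).1 = (qe (Polynomial.X : Polynomial k) Polynomial.X n).2 ∧
    (qe (Polynomial.X : Polynomial k) Polynomial.X n).1.degree < n  := by
  induction n with
  | zero => simp [qe]
  | succ n ih =>
    obtain ⟨h1, h2, h3, h4, h5⟩ := ih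
    have hd : (qe (Polynomial.X : Polynomial k) Polynomial.X (n+1)).1.degree = n := by
      rw [Polynomial.degree_eq_natDegree h2.ne_zero, h3]
    have hm : (Polynomial.X * (qe (Polynomial.X : Polynomial k) Polynomial.X (n+1)).1).Monic := Polynomial.monic_X.mul h2
    have hdm : (Polynomial.X * (qe (Polynomial.X : Polynomial k) Polynomial.X (n+1)).1).natDegree = n + 1 := by
      rw [Polynomial.monic_X.natDegree_mul h2, h3, Polynomial.natDegree_X, add_comm]
    have hlt : (qe (Polynomial.X : Polynomial k) Polynomial.X n).1.degree < (Polynomial.X * (qe (Polynomial.X : Polynomial k) Polynomial.X (n+1)).1).degree := by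
      rw [Polynomial.degree_eq_natDegree hm.ne_zero, hdm]
      refine h5.trans ?_
      exact_mod_cast Nat.lt_succ_self n
    refine ⟨?_, ?_, ?_, h1, ?_⟩
    · rw [qe_add_two]; simp only [h1, h4]
    · rw [qe_add_two]; simp only [← h1]
      exact hm.sub_of_left hlt
    · rw [qe_add_two]; simp only [← h1]
      rw [Polynomial.natDegree_eq_of_degree_eq (Polynomial.degree_sub_eq_left_of_degree_lt hlt), hdm]
    · rw [hd]; exact_mod_cast Nat.lt_succ_self n

theorem qe_gen_ne (k : Type*) [CommRing k] [Nontrivial k] (n : ℕ) :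
    (qe (gx k) (gy k) (n+1)).1 ≠ 0 ∧ (qe (gx k) (gy k) (n+1)).2 ≠ 0 := by
  have key : ∀ n, ((MvPolynomial.aeval ![(Polynomial.X : Polynomial k), Polynomial.X]) (qe (gx k) (gy k) n).1 = (qe (Polynomial.X : Polynomial k) Polynomial.X n).1 ∧
      (MvPolynomial.aeval ![(Polynomial.X : Polynomial k), Polynomial.X]) (qe (gx k) (gy k) n).2 = (qe (Polynomial.X : Polynomial k) Polynomial.X n).2) ∧ 
      ((MvPolynomial.aeval ![(Polynomial.X : Polynomial k), Polynomial.X]) (qe (gx k) (gy k) (n+1)).1 = (qe (Polynomial.X : Polynomial k) Polynomial.X (n+1)).1 ∧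
      (MvPolynomial.aeval ![(Polynomial.X : Polynomial k), Polynomial.X]) (qe (gx k) (gy k) (n+1)).2 = (qe (Polynomial.X : Polynomial k) Polynomial.X (n+1)).2) := by
    intro n
    induction n with
    | zero => simp [qe]
    | succ n ih =>
      refine ⟨ih.2, ?_⟩
      rw [qe_add_two, qe_add_two]
      simp only [map_sub, map_mul, ih.1.1, ih.1.2, ih.2.1, ih.2.2]
      simp [gx, gy]
  obtain ⟨h1, h2, -⟩ := qe_monic k n
  constructor
  · intro h
    have := (key n).2.1
    rw [h, map_zero] at this
    exact h2.ne_zero this.symm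
  · intro h
    have := (key n).2.2
    rw [h, map_zero, ← h1] at this
    exact h2.ne_zero this.symm

theorem pev_qX {k : Type*} [CommRing k] (a b : k) (n : ℕ) : pev a b (qX (n : ℤ)) = (qe a b n).1 := by
  rw [qX_nat]; exact (pev_qPair a b n).1.1
theorem pev_qY {k : Type*} [CommRing k] (a b : k) (n : ℕ) : pev a b (qY (n : ℤ)) = (qe a b n).2 := by
  rw [qY_nat]; exact (pev_qPair a b n).1.2

theorem pev_prod {k : Type*} [CommRing k] (a b : k) (j : ℕ) (f : ℕ → A2) :
    pev a b (∏ i ∈ Finset.range j, f i) = ∏ i ∈ Finset.range j, pev a b (f i) := by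
  unfold pev; exact map_prod _ _ _

theorem scale_core {K : Type*} [CommRing K] [IsDomain K] (P P' : K) (j : ℕ) (u v : ℕ → Kˣ) (F G : ℕ → K)
    (hF : ∀ i, F i ≠ 0)
    (h1 : P * ∏ i ∈ Finset.range j, F i = ∏ i ∈ Finset.range j, G i)
    (h2 : P' * ∏ i ∈ Finset.range j, (↑(u i) * F i) = ∏ i ∈ Finset.range j, (↑(v i) * G i)) :
    ∃ w : Kˣ, P' = w * P := by
  refine ⟨(∏ i ∈ Finset.range j, v i) * (∏ i ∈ Finset.range j, u i)⁻¹, ?_⟩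
  have hne : ∏ i ∈ Finset.range j, F i ≠ 0 := Finset.prod_ne_zero_iff.2 fun i _ => hF i
  apply mul_right_cancel₀ hne
  rw [Finset.prod_mul_distrib, Finset.prod_mul_distrib, ← h1] at h2
  have hu : ((∏ i ∈ Finset.range j, u i : Kˣ) : K) = ∏ i ∈ Finset.range j, (u i : K) := Units.coe_prod _ _
  have hv : ((∏ i ∈ Finset.range j, v i : Kˣ) : K) = ∏ i ∈ Finset.range j, (v i : K) := Units.coe_prod _ _
  rw [← hu, ← hv] at h2
  set U := ∏ i ∈ Finset.range j, u i
  set V := ∏ i ∈ Finset.range j, v i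
  have hUU : (U : K) * ((U⁻¹ : Kˣ) : K) = 1 := U.mul_inv
  rw [Units.val_mul]
  linear_combination ((U⁻¹ : Kˣ) : K) * h2 - P' * (∏ i ∈ Finset.range j, F i) * hUU

theorem aeval_unit {k : Type*} [CommRing k] (u : kˣ) (a b : k) :
    (MvPolynomial.aeval ![a, b]) (((Units.map (MvPolynomial.C : k →+* KK k).toMonoidHom u : (KK k)ˣ) : KK k)) = u := by
  simp

theorem homogX {k : Type*} [CommRing k] [IsDomain k] (u : kˣ) (a b : k) (n j : ℕ) (hj : j ≤ n)
    (h : pev a b (qbinomX n j) = 0) : pev (↑u * a) (↑u⁻¹ * b) (qbinomX n j) = 0 := by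
  unfold qbinomX at h ⊢
  split_ifs at h ⊢ with he
  swap
  · simp [pev]
  have hp := he.choose_spec
  set p := he.choose
  set U : (KK k)ˣ := Units.map (MvPolynomial.C : k →+* KK k).toMonoidHom u
  have hG : ∀ f g : KK k, pev f g p * ∏ i ∈ Finset.range j, (qe f g (i+1)).1 = ∏ i ∈ Finset.range j, (qe f g (n - i)).1 := by
    intro f g
    have := congrArg (pev f g) hp
    rw [pev_mul, pev_prod, pev_prod] at this
    have hA : ∀ i ∈ Finset.range j, (qe f g (i+1)).1 = pev f g (qX ((i : ℤ) + 1)) := by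
      intro i _
      rw [← pev_qX]; simp
    have hB : ∀ i ∈ Finset.range j, (qe f g (n - i)).1 = pev f g (qX ((n : ℤ) - (i : ℤ))) := by
      intro i hi
      rw [← pev_qX, Nat.cast_sub (by have := Finset.mem_range.1 hi; omega)]
    rw [Finset.prod_congr rfl hA, Finset.prod_congr rfl hB, this]
  have h2 := hG (↑U * gx k) (↑U⁻¹ * gy k)
  simp only [fun n => congrArg Prod.fst (qe_scale (gx k) (gy k) U n).1] at h2
  obtain ⟨w, hw⟩ := scale_core _ _ j _ _ _ _ (fun i => (qe_gen_ne k i).1) (hG (gx k) (gy k)) h2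
  have := congrArg (MvPolynomial.aeval ![a, b]) hw
  have hU' : U⁻¹ = Units.map (MvPolynomial.C : k →+* KK k).toMonoidHom u⁻¹ := by simp [U]
  rw [map_mul, pev_eval, pev_eval, map_mul, map_mul, hU', aeval_unit, aeval_unit] at this
  simp only [gx, gy, MvPolynomial.aeval_X, Matrix.cons_val_zero, Matrix.cons_val_one] at this
  rw [this, h, mul_zero]

theorem homogY {k : Type*} [CommRing k] [IsDomain k] (u : kˣ) (a b : k) (n j : ℕ) (hj : j ≤ n)
    (h : pev a b (qbinomY n j) = 0) : pev (↑u * a) (↑u⁻¹ * b) (qbinomY n j) = 0 := by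
  unfold qbinomY at h ⊢
  split_ifs at h ⊢ with he
  swap
  · simp [pev]
  have hp := he.choose_spec
  set p := he.choose
  set U : (KK k)ˣ := Units.map (MvPolynomial.C : k →+* KK k).toMonoidHom u
  have hG : ∀ f g : KK k, pev f g p * ∏ i ∈ Finset.range j, (qe f g (i+1)).2 = ∏ i ∈ Finset.range j, (qe f g (n - i)).2 := by
    intro f g
    have := congrArg (pev f g) hp
    rw [pev_mul, pev_prod, pev_prod] at this
    have hA : ∀ i ∈ Finset.range j, (qe f g (i+1)).2 = pev f g (qY ((i : ℤ) + 1)) := by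
      intro i _
      rw [← pev_qY]; simp
    have hB : ∀ i ∈ Finset.range j, (qe f g (n - i)).2 = pev f g (qY ((n : ℤ) - (i : ℤ))) := by
      intro i hi
      rw [← pev_qY, Nat.cast_sub (by have := Finset.mem_range.1 hi; omega)]
    rw [Finset.prod_congr rfl hA, Finset.prod_congr rfl hB, this]
  have h2 := hG (↑U * gx k) (↑U⁻¹ * gy k)
  simp only [fun n => congrArg Prod.snd (qe_scale (gx k) (gy k) U n).1] at h2
  obtain ⟨w, hw⟩ := scale_core _ _ j _ _ _ _ (fun i => (qe_gen_ne k i).2) (hG (gx k) (gy k)) h2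
  have := congrArg (MvPolynomial.aeval ![a, b]) hw
  have hU' : U⁻¹ = Units.map (MvPolynomial.C : k →+* KK k).toMonoidHom u⁻¹ := by simp [U]
  rw [map_mul, pev_eval, pev_eval, map_mul, map_mul, hU', aeval_unit, aeval_unit] at this
  simp only [gx, gy, MvPolynomial.aeval_X, Matrix.cons_val_zero, Matrix.cons_val_one] at this
  rw [this, h, mul_zero]

theorem pev_tw {k : Type*} [CommRing k] (a b : k) (e : ℕ) :
    pev a b (twX ((e + 1 : ℕ) : ℤ)) = (qe a b (e + 2)).1 - (qe a b e).1 ∧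
    pev a b (twY ((e + 1 : ℕ) : ℤ)) = (qe a b (e + 2)).2 - (qe a b e).2 := by
  have h1 : (((e + 1 : ℕ) : ℤ) + 1) = ((e + 2 : ℕ) : ℤ) := by push_cast; ring
  have h2 : (((e + 1 : ℕ) : ℤ) - 1) = (e : ℤ) := by push_cast; ring
  constructor
  · rw [twX, h1, h2, pev_sub, pev_qX, pev_qX]
  · rw [twY, h1, h2, pev_sub, pev_qY, pev_qY]

theorem pev_binom_one {k : Type*} [CommRing k] (a b : k) (n : ℕ) :
    pev a b (qbinomX n 1) = (qe a b n).1 ∧ pev a b (qbinomY n 1) = (qe a b n).2 := by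
  have e1 : qX 1 = 1 := by have := qX_nat 1; simpa [qPair] using this
  have e2 : qY 1 = 1 := by have := qY_nat 1; simpa [qPair] using this
  constructor
  · unfold qbinomX
    have he : ∃ p : A2, p * ∏ i ∈ Finset.range 1, qX ((i : ℤ) + 1) = ∏ i ∈ Finset.range 1, qX ((n : ℤ) - (i : ℤ)) :=
      ⟨qX n, by simp [e1]⟩
    rw [dif_pos he]
    have := he.choose_spec
    rw [← pev_qX]
    congr 1
    simpa [e1] using this
  · unfold qbinomY
    have he : ∃ p : A2, p * ∏ i ∈ Finset.range 1, qY ((i : ℤ) + 1) = ∏ i ∈ Finset.range 1, qY ((n : ℤ) - (i : ℤ)) :=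
      ⟨qY n, by simp [e2]⟩
    rw [dif_pos he]
    have := he.choose_spec
    rw [← pev_qY]
    congr 1
    simpa [e2] using this

theorem hq_of [IsDomain k] (R : PreRealization cs k V) (hR : ReflectionStable cs R) :
    ∀ i j, i ≠ j → M i j ≠ 0 → (qe (cartanS R i j) (cartanS R j i) (M i j)).2 = 0 := by
  intro i j hij h0
  have ho := order_simple cs hij h0
  have h1 : M i j ≠ 1 := M.off_diagonal i j hij
  have h := (hR i j hij (by rw [ho]; exact h0) (M i j) (by omega) (by rw [ho]) 1 le_rfl (by omega)).2
  rw [ho, Nat.div_self (by omega), pev_twist] at h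
  have ht := pev_tw (cartanS R i j) (cartanS R j i) 0
  have e1 : pev (cartanS R i j) (cartanS R j i) (twX ((1 : ℕ) : ℤ)) = cartanS R i j := by
    have := ht.1
    simpa [qe] using this
  have e2 : pev (cartanS R i j) (cartanS R j i) (twY ((1 : ℕ) : ℤ)) = cartanS R j i := by
    have := ht.2
    simpa [qe] using this
  rw [e1, e2, (pev_binom_one _ _ _).2] at h
  exact h

theorem final_aux [IsDomain k] (R : PreRealization cs k V) (hR : ReflectionStable cs R)
    (w1 w2 : W) (i1 i2 : B) (N : ℕ) (hN : 2 ≤ N)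
    (hab : gB M (gr cs w1 (ee i1)) (gr cs w2 (ee i2)) = -Real.cos (Real.pi / N))
    (hc : ((w1 * cs.simple i1 * w1⁻¹) * (w2 * cs.simple i2 * w2⁻¹)) ^ N = 1)
    (j : ℕ) (hj : 1 ≤ j) (hj' : j ≤ N - 1) :
    pev (dR R w2 (R.root i2) (R.rep w1 (R.coroot i1))) (dR R w1 (R.root i1) (R.rep w2 (R.coroot i2))) (qbinomX N j) = 0 ∧
    pev (dR R w2 (R.root i2) (R.rep w1 (R.coroot i1))) (dR R w1 (R.root i1) (R.rep w2 (R.coroot i2))) (qbinomY N j) = 0 := by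
  obtain ⟨y, p, q, e, hpq, hM, ha, hb⟩ := geometric cs hN hab hc
  have hq := hq_of R hR
  obtain ⟨κ1, r1, c1⟩ := tr_sign R hq (y * w1) 1 i1 (fst q p e) (by simpa using ha)
  obtain ⟨κ2, r2, c2⟩ := tr_sign R hq (y * w2) (alt cs p q e) i2 p hb
  rw [map_one, Module.End.one_apply] at r1 c1
  have hinv : ∀ f v, dR R y f (R.rep y v) = f v := dR_pair R y
  obtain ⟨g1, g2⟩ := rank2_pair R p q e
  rw [map_mul, Module.End.mul_apply] at r1 r2 c1 c2
  obtain ⟨x1, x2⟩ := pev_tw (cartanS R (fst q p e) (fst p q e)) (cartanS R (fst p q e) (fst q p e)) e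
  rw [← x1] at g1
  rw [← x2] at g2
  have hs : ((((-1 : kˣ) ^ e : kˣ)) : k) = (-1) ^ e := by simp
  have hs' : ((((-1 : kˣ) ^ e : kˣ))⁻¹ : kˣ) = ((-1) ^ e : kˣ) := by
    rw [← inv_pow]; simp
  set u : kˣ := κ1⁻¹ * κ2 * (-1) ^ e with hu
  have A1 : dR R w2 (R.root i2) (R.rep w1 (R.coroot i1)) = ↑u * pev (cartanS R (fst q p e) (fst p q e)) (cartanS R (fst p q e) (fst q p e)) (twX ((e + 1 : ℕ) : ℤ)) := by
    rw [← hinv, r2, c1, map_smul, LinearMap.smul_apply, g1, hu, Units.val_mul, Units.val_mul, hs, smul_eq_mul, smul_eq_mul]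
    ring
  have A2 : dR R w1 (R.root i1) (R.rep w2 (R.coroot i2)) = ↑u⁻¹ * pev (cartanS R (fst q p e) (fst p q e)) (cartanS R (fst p q e) (fst q p e)) (twY ((e + 1 : ℕ) : ℤ)) := by
    rw [← hinv, r1, c2, map_smul, LinearMap.smul_apply, g2, hu, mul_inv, mul_inv, inv_inv, hs', Units.val_mul, Units.val_mul, hs, smul_eq_mul, smul_eq_mul]
    ring
  have hne : fst q p e ≠ fst p q e := by
    rcases fst_cases q p e with ⟨h1, h2⟩ | ⟨h1, h2⟩ <;> rw [h1, h2]
    · exact hpq.symm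
    · exact hpq
  have hMM : M (fst q p e) (fst p q e) = (e + 1) * N := by
    rw [hM]
    rcases fst_cases q p e with ⟨h1, h2⟩ | ⟨h1, h2⟩ <;> rw [h1, h2]
    exact M.symmetric q p
  have h0 : M (fst q p e) (fst p q e) ≠ 0 := by
    rw [hMM]; positivity
  have ho := order_simple cs hne h0
  obtain ⟨H1, H2⟩ := hR _ _ hne (by rw [ho]; exact h0) N (by omega) (by rw [ho, hMM]; exact Dvd.intro_left _ rfl) j hj hj'
  rw [ho, hMM, Nat.mul_div_cancel _ (by omega), pev_twist] at H1 H2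
  rw [A1, A2]
  exact ⟨homogX u _ _ N j (by omega) H1, homogY u _ _ N j (by omega) H2⟩

theorem statement_12 [IsDomain k] [Module.Free k V] [Module.Finite k V]
    (cs : CoxeterSystem M W) (R : PreRealization cs k V)
    (hR : ReflectionStable cs R)
    (W' : Subgroup W) (hW' : IsReflectionSubgroup cs W') :
    ∀ (wm : W → W) (rm : W → B),
      IsReflectionDatum cs (canonicalGens cs (W' : Set W)) wm rm →
      ∀ s' ∈ canonicalGens cs (W' : Set W), ∀ t' ∈ canonicalGens cs (W' : Set W),
        s' ≠ t' → orderOf (s' * t') ≠ 0 →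
        ∀ j : ℕ, 1 ≤ j → j ≤ orderOf (s' * t') - 1 →
          pev (cartan R wm rm s' t') (cartan R wm rm t' s')
              (qbinomX (orderOf (s' * t')) j) = 0 ∧
          pev (cartan R wm rm s' t') (cartan R wm rm t' s')
              (qbinomY (orderOf (s' * t')) j) = 0 := by
  intro wm rm hd s hs t ht hne ho j hj hj'
  obtain ⟨es, ls⟩ := hd s hs
  obtain ⟨et, lt⟩ := hd t ht
  obtain ⟨hN, hab⟩ := angle cs W' hs ht es et ((gr_pos_iff cs _ _).2 ls) ((gr_pos_iff cs _ _).2 lt) hne ho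
  have hc : ((wm s * cs.simple (rm s) * (wm s)⁻¹) * (wm t * cs.simple (rm t) * (wm t)⁻¹)) ^ orderOf (s * t) = 1 := by
    rw [← es, ← et]; exact pow_orderOf_eq_one _
  exact final_aux R hR (wm s) (wm t) (rm s) (rm t) _ hN hab hc j hj hj'

end PaperStmt
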